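/- Let ω ≥ 1 be an integer and δ ∈ (0,1/8) be fixed, and let η > 0. The series ζ_{E₁}(s) = Σ_{k≥1} E_{1,k}(s) converges absolutely and locally uniformly on the strip {s ∈ ℂ : 1 < Re(s) < 2}, and its sum extends to a meromorphic function on the half-plane {Re(s) > -1/2} which is holomorphic at s = 0. Moreover, for fixed ω and δ, the derivative at 0 of this extension satisfies ζ_{E₁}'(0) = 2ω·(-ζ(-1) - ζ'(-1) + ζ(-1)·log(2ω)) + (ω/6)·log(η) + o(1) as η → 0⁺. -/

import Mathlib

open MeasureTheory Filter

/-- The error integral `E_{1,k}(s)` for the model hyperbolic cone of angle `2π/ω` and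
boundary parameter `η`:
`E_{1,k}(s) = (2 sin(πs)/π) · kω · ∫_{k^{δ-1}/ω}^{∞} (k²ω²u² - 1/4)^{-s} ·
  (log(u·cosh η + √(1 + u² sinh(η)²)) - log(u+1)) du`. -/
noncomputable def coneE1 (ω : ℕ) (η δ : ℝ) (k : ℕ) (s : ℂ) : ℂ :=
  (2 * Complex.sin ((Real.pi : ℂ) * s) / (Real.pi : ℂ)) * ((k : ℂ) * (ω : ℂ)) *
    ∫ u in Set.Ioi ((k : ℝ) ^ (δ - 1) / ω),
      (((k : ℝ) ^ 2 * (ω : ℝ) ^ 2 * u ^ 2 - 1 / 4 : ℝ) : ℂ) ^ (-s) *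
        ((Real.log (u * Real.cosh η + Real.sqrt (1 + u ^ 2 * Real.sinh η ^ 2)) -
          Real.log (u + 1) : ℝ) : ℂ)


lemma diffAt_integral {μ : Measure ℝ} {f : ℂ → ℝ → ℂ} {s0 : ℂ} {r : ℝ} (hr : 0 < r)
    (bound : ℝ → ℝ) (hb : Integrable bound μ)
    (hmeas : ∀ s ∈ Metric.ball s0 r, AEStronglyMeasurable (f s) μ)
    (hd : ∀ᵐ u ∂μ, DifferentiableOn ℂ (fun s => f s u) (Metric.ball s0 r))
    (hbd : ∀ᵐ u ∂μ, ∀ s ∈ Metric.ball s0 r, ‖f s u‖ ≤ bound u) :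
    DifferentiableAt ℂ (fun s => ∫ u, f s u ∂μ) s0 := by
  have h0 : s0 ∈ Metric.ball s0 r := Metric.mem_ball_self hr
  have hD : ∀ᵐ u ∂μ, HasDerivAt (fun s => f s u) (deriv (fun s => f s u) s0) s0 := by
    filter_upwards [hd] with u hu
    exact (hu.differentiableAt (Metric.isOpen_ball.mem_nhds h0)).hasDerivAt
  have hc : ∀ n : ℕ, s0 + (((r / 2) / (n + 1) : ℝ) : ℂ) ∈ Metric.ball s0 r := by
    intro n
    rw [Metric.mem_ball, dist_eq_norm, add_sub_cancel_left, Complex.norm_real, Real.norm_eq_abs,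
      abs_of_pos (by positivity)]
    have : r / 2 / (n + 1) ≤ r / 2 := div_le_self (by positivity) (by linarith [n.cast_nonneg (α := ℝ)])
    linarith
  have hlim : Tendsto (fun n : ℕ => s0 + (((r / 2) / (n + 1) : ℝ) : ℂ)) atTop (nhdsWithin s0 {s0}ᶜ) := by
    apply tendsto_nhdsWithin_iff.2
    constructor
    · have h1 : Tendsto (fun n : ℕ => ((r / 2) / ((n : ℝ) + 1))) atTop (nhds 0) := by
        have := (tendsto_one_div_add_atTop_nhds_zero_nat (𝕜 := ℝ)).const_mul (r / 2)
        simpa [div_eq_mul_inv] using this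
      have h2 := (Complex.continuous_ofReal.tendsto 0).comp h1
      have h3 := h2.const_add s0
      simpa [Function.comp_def] using h3
    · refine Eventually.of_forall fun n => ?_
      simp only [Set.mem_compl_iff, Set.mem_singleton_iff, add_eq_left]
      exact_mod_cast (by positivity : (r / 2) / ((n : ℝ) + 1) ≠ 0)
  have hF'm : AEStronglyMeasurable (fun u => deriv (fun s => f s u) s0) μ := by
    refine aestronglyMeasurable_of_tendsto_ae (u := atTop)
      (f := fun (n : ℕ) u => slope (fun s => f s u) s0 (s0 + (((r / 2) / (n + 1) : ℝ) : ℂ))) ?_ ?_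
    · intro n
      simp only [slope_def_module]
      exact AEStronglyMeasurable.const_smul ((hmeas _ (hc n)).sub (hmeas _ h0))
        ((s0 + (((r / 2) / (n + 1) : ℝ) : ℂ) - s0)⁻¹)
    · filter_upwards [hD] with u hu
      exact (hasDerivAt_iff_tendsto_slope.1 hu).comp hlim
  refine (hasDerivAt_integral_of_dominated_loc_of_deriv_le (s := Metric.ball s0 (r / 2))
    (F' := fun s u => deriv (fun s => f s u) s) (bound := fun u => bound u / (r / 4))
    (Metric.ball_mem_nhds _ (by positivity)) ?_ ?_ hF'm ?_ (hb.div_const _) ?_).2.differentiableAt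
  · exact eventually_of_mem (Metric.ball_mem_nhds s0 hr) hmeas
  · refine hb.mono' (hmeas _ h0) ?_
    filter_upwards [hbd] with u hu using hu _ h0
  · filter_upwards [hbd, hd] with u hu hdu s hs
    have hsub : Metric.closedBall s (r / 4) ⊆ Metric.ball s0 r := by
      intro z hz
      rw [Metric.mem_closedBall] at hz
      rw [Metric.mem_ball] at hs ⊢
      have := dist_triangle z s s0
      linarith
    refine Complex.norm_deriv_le_of_forall_mem_sphere_norm_le (by positivity) ?_ ?_
    · apply DifferentiableOn.diffContOnCl
      rw [closure_ball _ (by positivity)]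
      exact hdu.mono hsub
    · intro z hz
      exact hu z (hsub (Metric.sphere_subset_closedBall hz))
  · filter_upwards [hd] with u hu s hs
    exact (hu.differentiableAt (Metric.isOpen_ball.mem_nhds
      (Metric.ball_subset_ball (by linarith) hs))).hasDerivAt

noncomputable def gg (η u : ℝ) : ℝ :=
  Real.log (u * Real.cosh η + Real.sqrt (1 + u ^ 2 * Real.sinh η ^ 2)) - Real.log (u + 1)

noncomputable def hh (η u : ℝ) : ℝ := gg η u - (Real.cosh η - 1) * u

noncomputable def KK (η : ℝ) : ℝ :=
  Real.cosh η * Real.sinh η ^ 2 + (Real.cosh η - 1) * Real.cosh η * Real.sinh η ^ 2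
   + 2 * (Real.cosh η - 1) * Real.sinh η ^ 2
   + 2 * (Real.cosh η - 1) * Real.cosh η * (1 + Real.sinh η ^ 2)

lemma yy_ge (η u : ℝ) : 1 ≤ Real.sqrt (1 + u ^ 2 * Real.sinh η ^ 2) := by
  rw [Real.one_le_sqrt]; nlinarith [sq_nonneg (u * Real.sinh η)]

lemma yy_sq (η u : ℝ) : Real.sqrt (1 + u ^ 2 * Real.sinh η ^ 2) ^ 2 = 1 + u ^ 2 * Real.sinh η ^ 2 :=
  Real.sq_sqrt (by positivity)

lemma gg_nonneg {η u : ℝ} (hu : 0 ≤ u) : 0 ≤ gg η u := by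
  have h1 := yy_ge η u
  have h2 := Real.one_le_cosh η
  unfold gg
  rw [sub_nonneg]
  apply Real.log_le_log (by linarith)
  nlinarith

lemma yy_le {η u : ℝ} (hη : 0 ≤ η) (hu : 0 ≤ u) :
    Real.sqrt (1 + u ^ 2 * Real.sinh η ^ 2) ≤ 1 + u * Real.sinh η := by
  have h3 : 0 ≤ Real.sinh η := Real.sinh_nonneg_iff.2 hη
  rw [Real.sqrt_le_left (by positivity)]
  nlinarith [mul_nonneg hu h3]

lemma gg_le {η u : ℝ} (hη : 0 ≤ η) (hu : 0 ≤ u) : gg η u ≤ η := by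
  have h1 := yy_ge η u
  have h2 := Real.one_le_cosh η
  have h3 := yy_le hη hu
  have h4 : Real.cosh η + Real.sinh η = Real.exp η := Real.cosh_add_sinh η
  have h5 : 1 ≤ Real.exp η := Real.one_le_exp hη
  unfold gg
  rw [sub_le_iff_le_add]
  have : η + Real.log (u + 1) = Real.log (Real.exp η * (u + 1)) := by
    rw [Real.log_mul (Real.exp_pos η).ne' (by linarith), Real.log_exp]
  rw [this]
  apply Real.log_le_log (by nlinarith)
  nlinarith

lemma gg_le_mul {η u : ℝ} (hη : 0 ≤ η) (hu : 0 ≤ u) : gg η u ≤ (Real.exp η - 1) * u := by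
  have h1 := yy_ge η u
  have h2 := Real.one_le_cosh η
  have h3 := yy_le hη hu
  have h4 : Real.cosh η + Real.sinh η = Real.exp η := Real.cosh_add_sinh η
  have h5 : 1 ≤ Real.exp η := Real.one_le_exp hη
  unfold gg
  rw [← Real.log_div (by nlinarith) (by linarith)]
  refine (Real.log_le_sub_one_of_pos (by apply div_pos <;> nlinarith)).trans ?_
  rw [sub_le_iff_le_add, div_le_iff₀ (by linarith)]
  have : 0 ≤ (Real.exp η - 1) * u * u := by
    apply mul_nonneg (mul_nonneg _ hu) hu; linarith
  nlinarith

lemma continuousOn_gg (η : ℝ) : ContinuousOn (gg η) (Set.Ici 0) := by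
  unfold gg
  intro u hu
  have hu : 0 ≤ u := hu
  have h1 := yy_ge η u
  have h2 := Real.one_le_cosh η
  apply ContinuousAt.continuousWithinAt
  apply ContinuousAt.sub
  · apply ContinuousAt.log (by fun_prop)
    nlinarith
  · apply ContinuousAt.log (by fun_prop)
    linarith

lemma hasDerivAt_yy (η u : ℝ) : HasDerivAt (fun u => Real.sqrt (1 + u ^ 2 * Real.sinh η ^ 2))
    (u * Real.sinh η ^ 2 / Real.sqrt (1 + u ^ 2 * Real.sinh η ^ 2)) u := by
  have h : HasDerivAt (fun u : ℝ => 1 + u ^ 2 * Real.sinh η ^ 2) (2 * u * Real.sinh η ^ 2) u := by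
    have := ((hasDerivAt_pow 2 u).mul_const (Real.sinh η ^ 2)).const_add 1
    simpa using this
  have := h.sqrt (by positivity)
  convert this using 1
  have : Real.sqrt (1 + u ^ 2 * Real.sinh η ^ 2) ≠ 0 := by linarith [yy_ge η u]
  field_simp

lemma hasDerivAt_gg (η : ℝ) {u : ℝ} (hu : 0 ≤ u) : HasDerivAt (gg η)
    ((Real.cosh η + u * Real.sinh η ^ 2 / Real.sqrt (1 + u ^ 2 * Real.sinh η ^ 2)) /
      (u * Real.cosh η + Real.sqrt (1 + u ^ 2 * Real.sinh η ^ 2)) - 1 / (u + 1)) u := by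
  have h1 := yy_ge η u
  have h2 := Real.one_le_cosh η
  have ha : HasDerivAt (fun u => u * Real.cosh η + Real.sqrt (1 + u ^ 2 * Real.sinh η ^ 2))
      (Real.cosh η + u * Real.sinh η ^ 2 / Real.sqrt (1 + u ^ 2 * Real.sinh η ^ 2)) u := by
    have := ((hasDerivAt_id u).mul_const (Real.cosh η)).add (hasDerivAt_yy η u)
    simpa using! this
  have hb : HasDerivAt (fun u : ℝ => u + 1) 1 u := (hasDerivAt_id u).add_const 1
  exact (ha.log (by nlinarith)).sub (hb.log (by linarith))

lemma hh_bound {η u : ℝ} (hu : 0 ≤ u) (hu1 : u ≤ 1) : |hh η u| ≤ KK η * u ^ 3 := by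
  have key : ∀ x ∈ Set.Icc 0 u, HasDerivWithinAt (hh η)
      (((Real.cosh η + x * Real.sinh η ^ 2 / Real.sqrt (1 + x ^ 2 * Real.sinh η ^ 2)) /
      (x * Real.cosh η + Real.sqrt (1 + x ^ 2 * Real.sinh η ^ 2)) - 1 / (x + 1))
        - (Real.cosh η - 1)) (Set.Icc 0 u) x := by
    intro x hx
    have := (hasDerivAt_gg η hx.1).sub ((hasDerivAt_id x).const_mul (Real.cosh η - 1))
    have := this.hasDerivWithinAt (s := Set.Icc 0 u)
    simpa using! this
  have hbd : ∀ x ∈ Set.Icc 0 u, ‖((Real.cosh η + x * Real.sinh η ^ 2 / Real.sqrt (1 + x ^ 2 * Real.sinh η ^ 2)) /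
      (x * Real.cosh η + Real.sqrt (1 + x ^ 2 * Real.sinh η ^ 2)) - 1 / (x + 1))
        - (Real.cosh η - 1)‖ ≤ KK η * u ^ 2 := by
    rintro x ⟨hx0, hxu⟩
    have hx1 : x ≤ 1 := hxu.trans hu1
    have h1 := yy_ge η x
    have h2 := Real.one_le_cosh η
    have h3 := yy_sq η x
    have hS : Real.sinh η ^ 2 = Real.cosh η ^ 2 - 1 := by rw [Real.sinh_sq]
    unfold KK
    set y := Real.sqrt (1 + x ^ 2 * Real.sinh η ^ 2) with hy
    set C := Real.cosh η with hC
    set Q := Real.sinh η ^ 2 with hQ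
    have hQ0 : 0 ≤ Q := by positivity
    have hden : 1 ≤ y * (x * C + y) * (x + 1) := by
      have : 1 ≤ x * C + y := by nlinarith
      have := one_le_mul_of_one_le_of_one_le h1 this
      exact one_le_mul_of_one_le_of_one_le this (by linarith)
    have e : ((C + x * Q / y) / (x * C + y) - 1 / (x + 1)) - (C - 1) =
        (C * (y - 1) - (C - 1) * C * x * (y - 1) - (C - 1) * (1 + x) * x ^ 2 * Q
          - (C - 1) * C * x ^ 2 * y) / (y * (x * C + y) * (x + 1)) := by
      have a1 : y ≠ 0 := by linarith
      have a2 : x * C + y ≠ 0 := by nlinarith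
      have a3 : x + 1 ≠ 0 := by linarith
      field_simp
      have h3' : y ^ 2 = 1 + x ^ 2 * (C ^ 2 - 1) := by rw [h3, hS]
      rw [hS]
      linear_combination (-C - C * x + x) * h3'
    rw [e, Real.norm_eq_abs, abs_div, abs_of_pos (lt_of_lt_of_le one_pos hden)]
    refine (div_le_self (abs_nonneg _) hden).trans ?_
    have hy1 : y - 1 ≤ x ^ 2 * Q := by nlinarith
    have hy2 : y ≤ 1 + Q := by
      have : x ^ 2 ≤ 1 := pow_le_one₀ hx0 hx1
      nlinarith
    have b1 : |C * (y - 1)| ≤ C * (x ^ 2 * Q) := by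
      rw [abs_of_nonneg (by nlinarith)]; exact mul_le_mul_of_nonneg_left hy1 (by linarith)
    have c0 : 0 ≤ C - 1 := by linarith
    have C0 : 0 ≤ C := by linarith
    have b2 : |(C - 1) * C * x * (y - 1)| ≤ (C - 1) * C * (x ^ 2 * Q) := by
      rw [abs_of_nonneg (by apply mul_nonneg (by positivity); linarith)]
      calc _ ≤ (C - 1) * C * 1 * (x ^ 2 * Q) := by gcongr
        _ = _ := by ring
    have b3 : |(C - 1) * (1 + x) * x ^ 2 * Q| ≤ (C - 1) * 2 * x ^ 2 * Q := by
      rw [abs_of_nonneg (by positivity)]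
      gcongr; linarith
    have b4 : |(C - 1) * C * x ^ 2 * y| ≤ (C - 1) * C * x ^ 2 * (1 + Q) := by
      rw [abs_of_nonneg (by positivity)]
      gcongr
    have hsq : x ^ 2 ≤ u ^ 2 := by gcongr
    calc _ ≤ |C * (y - 1)| + |(C - 1) * C * x * (y - 1)| + |(C - 1) * (1 + x) * x ^ 2 * Q|
          + |(C - 1) * C * x ^ 2 * y| := by
            refine (abs_sub _ _).trans ?_
            gcongr
            refine (abs_sub _ _).trans ?_
            gcongr
            exact abs_sub _ _
      _ ≤ C * (x ^ 2 * Q) + (C - 1) * C * (x ^ 2 * Q) + (C - 1) * 2 * x ^ 2 * Q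
          + (C - 1) * C * x ^ 2 * (1 + Q) := by gcongr
      _ ≤ (C * Q + (C - 1) * C * Q + 2 * (C - 1) * Q + 2 * (C - 1) * C * (1 + Q)) * x ^ 2 := by
        have : 0 ≤ (C - 1) * C * x ^ 2 * (1 + Q) := by positivity
        nlinarith
      _ ≤ _ := by gcongr
  have := (convex_Icc 0 u).norm_image_sub_le_of_norm_hasDerivWithin_le key hbd
    (Set.left_mem_Icc.2 hu) (Set.right_mem_Icc.2 hu)
  have h0 : hh η 0 = 0 := by simp [hh, gg]
  rw [h0, sub_zero, sub_zero, Real.norm_eq_abs, Real.norm_eq_abs, abs_of_nonneg hu] at this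
  calc _ ≤ _ := this
    _ = _ := by ring

lemma KK_nonneg (η : ℝ) : 0 ≤ KK η := by
  have h2 : 0 ≤ Real.cosh η - 1 := by linarith [Real.one_le_cosh η]
  have h3 : 0 ≤ Real.cosh η := by linarith
  unfold KK
  positivity

lemma KK_tendsto : Tendsto KK (nhdsWithin 0 (Set.Ioi 0)) (nhds 0) := by
  have : Continuous KK := by unfold KK; fun_prop
  have h := (this.tendsto 0).mono_left (nhdsWithin_le_nhds (s := Set.Ioi 0))
  simpa [KK] using h

lemma gg_inf {η u : ℝ} (hη : 0 < η) (hu : 1 ≤ u) :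
    0 ≤ gg η u - η + 1 / u ∧ gg η u - η + 1 / u ≤ (1 + 1 / Real.sinh η) * u ^ (-2 : ℝ) := by
  have hS : 0 < Real.sinh η := Real.sinh_pos_iff.2 hη
  have hC := Real.one_le_cosh η
  have hu0 : 0 < u := by linarith
  have hy := yy_sq η u
  have hy1 := yy_ge η u
  have hE : Real.cosh η + Real.sinh η = Real.exp η := Real.cosh_add_sinh η
  have hrp : u ^ (-2 : ℝ) = 1 / u ^ 2 := by
    rw [Real.rpow_neg hu0.le]; norm_num
  set y := Real.sqrt (1 + u ^ 2 * Real.sinh η ^ 2)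
  set S := Real.sinh η
  set C := Real.cosh η
  have hyS : u * S ≤ y := by
    apply Real.le_sqrt_of_sq_le; nlinarith
  have hyS2 : y ≤ u * S + 1 / (u * S) := by
    have : 0 < u * S := by positivity
    rw [← sub_nonneg]
    have e : u * S + 1 / (u * S) - y = (u * S * (u * S - y) + 1) / (u * S) := by field_simp; ring
    rw [e]
    apply div_nonneg _ this.le
    have : u * S * (y - u * S) ≤ (y + u * S) * (y - u * S) := by
      apply mul_le_mul_of_nonneg_right _ (by linarith); linarith
    nlinarith
  have e1 : gg η u - η = Real.log ((u * C + y) / (u * Real.exp η)) - Real.log (1 + 1 / u) := by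
    have : (1 + 1 / u) = (u + 1) / u := by field_simp
    rw [this, Real.log_div (by nlinarith) (by positivity), Real.log_div (by linarith) (by linarith),
      Real.log_mul (by linarith) (Real.exp_pos _).ne', Real.log_exp]
    unfold gg
    ring
  have p1 : 1 ≤ (u * C + y) / (u * Real.exp η) := by
    rw [one_le_div (by positivity), ← hE]; nlinarith
  have p2 : (u * C + y) / (u * Real.exp η) - 1 ≤ 1 / S * (1 / u ^ 2) := by
    rw [sub_le_iff_le_add, div_le_iff₀ (by positivity), ← hE]
    have : 1 / (u * S) ≤ (1 / S * (1 / u ^ 2)) * (u * (C + S)) := by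
      have : (1 / S * (1 / u ^ 2)) * (u * (C + S)) = (1 / (u * S)) * (C + S) := by field_simp
      rw [this]
      apply le_mul_of_one_le_right (by positivity); linarith
    nlinarith
  have p3 := Real.log_le_sub_one_of_pos (lt_of_lt_of_le one_pos p1)
  have p4 := Real.log_nonneg p1
  have hv : 0 < 1 / u := by positivity
  have p5 := Real.log_le_sub_one_of_pos (by positivity : 0 < 1 + 1 / u)
  have p6 := Real.one_sub_inv_le_log_of_pos (by positivity : 0 < 1 + 1 / u)
  have p7 : 1 / u - 1 / u ^ 2 ≤ 1 - (1 + 1 / u)⁻¹ := by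
    rw [← sub_nonneg]
    have : 1 - (1 + 1 / u)⁻¹ - (1 / u - 1 / u ^ 2) = 1 / (u ^ 2 * (u + 1)) := by field_simp; ring
    rw [this]; positivity
  rw [e1, hrp]
  constructor
  · linarith
  · linarith

lemma hasDerivAt_Phi (η : ℝ) {u : ℝ} (hu : 0 ≤ u) :
    HasDerivAt (fun u => u * gg η u - Real.log (Real.cosh η + Real.sqrt (1 + u ^ 2 * Real.sinh η ^ 2)))
      (gg η u) u := by
  have h1 := yy_ge η u
  have h2 := Real.one_le_cosh η
  have hy := yy_sq η u
  have hS : Real.sinh η ^ 2 = Real.cosh η ^ 2 - 1 := by rw [Real.sinh_sq]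
  have hd := ((hasDerivAt_id u).mul (hasDerivAt_gg η hu)).sub
    (((hasDerivAt_yy η u).const_add (Real.cosh η)).log (by positivity))
  convert! hd using 1
  simp only [id, one_mul]
  set y := Real.sqrt (1 + u ^ 2 * Real.sinh η ^ 2)
  set C := Real.cosh η
  set Q := Real.sinh η ^ 2
  have a1 : y ≠ 0 := by linarith
  have a2 : u * C + y ≠ 0 := by nlinarith
  have a3 : u + 1 ≠ 0 := by linarith
  have a4 : C + y ≠ 0 := by linarith
  rw [← sub_eq_zero]
  have hy' : y ^ 2 = 1 + u ^ 2 * (C ^ 2 - 1) := by rw [hy, hS]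
  rw [hS]
  field_simp
  ring_nf
  have hy3 : y ^ 3 = y * (1 + u ^ 2 * (C ^ 2 - 1)) := by rw [← hy']; ring
  simp only [hy3]
  ring


noncomputable def BB (η : ℝ) (w : ℂ) : ℂ :=
  ∫ u in Set.Ioi (1 : ℝ), (u : ℂ) ^ (-w) * ((gg η u - η + 1 / u : ℝ) : ℂ)

noncomputable def PP (η : ℝ) (w : ℂ) (a : ℝ) : ℂ :=
  ∫ u in Set.Ioc (0 : ℝ) a, (u : ℂ) ^ (-w) * (hh η u : ℂ)

lemma continuousOn_gginf (η : ℝ) : ContinuousOn (fun u => gg η u - η + 1 / u) (Set.Ioi 0) := by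
  apply ContinuousOn.add
  · exact ((continuousOn_gg η).mono Set.Ioi_subset_Ici_self).sub continuousOn_const
  · exact continuousOn_const.div continuousOn_id (fun u hu => (ne_of_gt hu))

lemma BB_zero {η : ℝ} (hη : 0 < η) :
    BB η 0 = ((-1 + Real.log 2 + η - Real.log (Real.sinh η) : ℝ) : ℂ) := by
  have hS : 0 < Real.sinh η := Real.sinh_pos_iff.2 hη
  have hC := Real.one_le_cosh η
  unfold BB
  simp only [neg_zero, Complex.cpow_zero, one_mul]
  rw [integral_complex_ofReal]
  congr 1
  have hder : ∀ x ∈ Set.Ici (1 : ℝ), HasDerivAt (fun u => (u * gg η u -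
      Real.log (Real.cosh η + Real.sqrt (1 + u ^ 2 * Real.sinh η ^ 2))) - η * u + Real.log u)
      (gg η x - η + 1 / x) x := by
    intro x hx
    have hx : (1 : ℝ) ≤ x := hx
    have h := ((hasDerivAt_Phi η (by linarith : 0 ≤ x)).sub ((hasDerivAt_id x).const_mul η)).add
      (Real.hasDerivAt_log (by linarith : x ≠ 0))
    convert! h using 1
    simp
  have hintg : IntegrableOn (fun u => gg η u - η + 1 / u) (Set.Ioi 1) := by
    refine ((integrableOn_Ioi_rpow_of_lt (by norm_num : (-2 : ℝ) < -1) one_pos).const_mul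
      (1 + 1 / Real.sinh η)).mono' ?_ ?_
    · exact ((continuousOn_gginf η).mono (Set.Ioi_subset_Ioi zero_le_one)).aestronglyMeasurable
        measurableSet_Ioi
    · refine (ae_restrict_iff' measurableSet_Ioi).2 (ae_of_all _ fun u hu => ?_)
      have := gg_inf hη (le_of_lt hu : (1 : ℝ) ≤ u)
      rw [Real.norm_eq_abs, abs_of_nonneg this.1]
      exact this.2
  have hlim : Tendsto (fun u => (u * gg η u -
      Real.log (Real.cosh η + Real.sqrt (1 + u ^ 2 * Real.sinh η ^ 2))) - η * u + Real.log u) atTop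
      (nhds (-1 - Real.log (Real.sinh η))) := by
    have l1 : Tendsto (fun u => u * (gg η u - η + 1 / u)) atTop (nhds 0) := by
      have t := (tendsto_inv_atTop_zero (𝕜 := ℝ)).const_mul (1 + 1 / Real.sinh η)
      rw [mul_zero] at t
      refine tendsto_of_tendsto_of_tendsto_of_le_of_le' tendsto_const_nhds t ?_ ?_
      · filter_upwards [eventually_ge_atTop 1] with u hu
        exact mul_nonneg (by linarith) (gg_inf hη hu).1
      · filter_upwards [eventually_ge_atTop 1] with u hu
        have hu0 : 0 < u := by linarith
        have := mul_le_mul_of_nonneg_left (gg_inf hη hu).2 hu0.le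
        refine this.trans (le_of_eq ?_)
        rw [Real.rpow_neg hu0.le]
        norm_num
        field_simp
    have l2 : Tendsto (fun u => (Real.cosh η + Real.sqrt (1 + u ^ 2 * Real.sinh η ^ 2)) / u) atTop
        (nhds (Real.sinh η)) := by
      have t := ((tendsto_inv_atTop_zero (𝕜 := ℝ)).const_mul (1 + Real.cosh η)).const_add (Real.sinh η)
      rw [mul_zero, add_zero] at t
      refine tendsto_of_tendsto_of_tendsto_of_le_of_le' tendsto_const_nhds t ?_ ?_
      · filter_upwards [eventually_ge_atTop 1] with u hu
        rw [le_div_iff₀ (by linarith)]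
        have : u * Real.sinh η ≤ Real.sqrt (1 + u ^ 2 * Real.sinh η ^ 2) := by
          apply Real.le_sqrt_of_sq_le; nlinarith
        linarith
      · filter_upwards [eventually_ge_atTop 1] with u hu
        have hu0 : 0 < u := by linarith
        rw [div_le_iff₀ (by linarith)]
        have := yy_le hη.le hu0.le
        have e : (Real.sinh η + (1 + Real.cosh η) * u⁻¹) * u = Real.sinh η * u + (1 + Real.cosh η) := by
          field_simp
        rw [e]; linarith
    have l3 := (l1.sub_const 1).sub (l2.log hS.ne')
    simp only [zero_sub] at l3
    refine l3.congr' ?_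
    filter_upwards [eventually_ge_atTop 1] with u hu
    have hu0 : 0 < u := by linarith
    rw [Real.log_div (by positivity) hu0.ne']
    field_simp
    ring
  rw [integral_Ioi_of_hasDerivAt_of_tendsto' hder hintg hlim]
  have hy : Real.sqrt (1 + 1 ^ 2 * Real.sinh η ^ 2) = Real.cosh η := by
    rw [Real.sinh_sq]
    rw [show 1 + 1 ^ 2 * (Real.cosh η ^ 2 - 1) = Real.cosh η ^ 2 by ring]
    exact Real.sqrt_sq (by linarith)
  unfold gg
  rw [hy]
  norm_num
  ring

lemma cpow_pos' {x : ℝ} (hx : 0 < x) (z : ℂ) : (x : ℂ) ^ z = Complex.exp (Real.log x * z) := by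
  rw [Complex.cpow_def_of_ne_zero (by exact_mod_cast hx.ne'), Complex.ofReal_log hx.le]

lemma cpow_key {x w : ℝ} (hx : 0 < x) (hw : 0 < w) (δ : ℝ) (q m : ℂ) :
    ((x * w : ℝ) : ℂ) ^ (1 - q) * ((x ^ (δ - 1) / w : ℝ) : ℂ) ^ (m - q) =
      (x : ℂ) ^ (1 - m + δ * (m - q)) * (w : ℂ) ^ (1 - m) := by
  rw [cpow_pos' (by positivity), cpow_pos' (by positivity), cpow_pos' hx, cpow_pos' hw,
    ← Complex.exp_add, ← Complex.exp_add, Real.log_mul hx.ne' hw.ne',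
    Real.log_div (by positivity) hw.ne', Real.log_rpow hx]
  congr 1
  push_cast
  ring

lemma rpow_key {x w : ℝ} (hx : 0 < x) (hw : 0 < w) (δ : ℝ) (q m : ℝ) :
    ((x * w : ℝ)) ^ (1 - q) * ((x ^ (δ - 1) / w : ℝ)) ^ (m - q) =
      (x) ^ (1 - m + δ * (m - q)) * (w) ^ (1 - m) := by
  rw [Real.rpow_def_of_pos (by positivity), Real.rpow_def_of_pos (by positivity : 0 < x ^ (δ - 1) / w),
    Real.rpow_def_of_pos hx (1 - m + δ * (m - q)), Real.rpow_def_of_pos hw,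
    ← Real.exp_add, ← Real.exp_add, Real.log_mul hx.ne' hw.ne',
    Real.log_div (by positivity) hw.ne', Real.log_rpow hx]
  congr 1
  ring

noncomputable def JJ (ω : ℕ) (η δ : ℝ) (φ : ℂ → ℝ → ℂ) (k : ℕ) (s : ℂ) : ℂ :=
  ((k : ℂ) * (ω : ℂ)) * ∫ u in Set.Ioi ((k : ℝ) ^ (δ - 1) / ω), φ s (k * ω * u) * (gg η u : ℂ)

structure Adm (U : Set ℂ) (φ : ℂ → ℝ → ℂ) : Prop where
  diff : ∀ t : ℝ, 1 ≤ t → DifferentiableOn ℂ (fun s => φ s t) U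
  cont : ∀ s ∈ U, ContinuousOn (φ s) (Set.Ici 1)
  bd : ∀ s ∈ U, ∃ r : ℝ, 0 < r ∧ Metric.ball s r ⊆ U ∧ ∃ M p : ℝ, 0 ≤ M ∧ 2 < p ∧
    ∀ z ∈ Metric.ball s r, ∀ t : ℝ, 1 ≤ t → ‖φ z t‖ ≤ M * t ^ (-p)

def LUS (U : Set ℂ) (f : ℕ → ℂ → ℂ) : Prop :=
  ∀ s ∈ U, ∃ r : ℝ, 0 < r ∧ Metric.ball s r ⊆ U ∧ ∃ M : ℕ → ℝ, Summable M ∧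
    ∀ k, ∀ z ∈ Metric.ball s r, ‖f k z‖ ≤ M k

lemma LUS.summable {U : Set ℂ} {f : ℕ → ℂ → ℂ} (h : LUS U f) {s : ℂ} (hs : s ∈ U) :
    Summable (fun k => ‖f k s‖) := by
  obtain ⟨r, hr, -, M, hM, hb⟩ := h s hs
  exact Summable.of_nonneg_of_le (fun k => norm_nonneg _)
    (fun k => hb k s (Metric.mem_ball_self hr)) hM

lemma LUS.tendsto {U : Set ℂ} {f : ℕ → ℂ → ℂ} (h : LUS U f) :
    TendstoLocallyUniformlyOn (fun (n : ℕ) (s : ℂ) => ∑ k ∈ Finset.range n, f k s)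
      (fun s => ∑' k, f k s) atTop U := by
  intro V hV s hs
  obtain ⟨r, hr, -, M, hM, hb⟩ := h s hs
  refine ⟨Metric.ball s r, mem_nhdsWithin_of_mem_nhds (Metric.ball_mem_nhds s hr), ?_⟩
  have := tendstoUniformlyOn_tsum_nat hM (f := f) (s := Metric.ball s r) (fun n x hx => hb n x hx)
  exact this V hV

lemma LUS.differentiableAt {U : Set ℂ} {f : ℕ → ℂ → ℂ} (h : LUS U f)
    (hd : ∀ k, ∀ s ∈ U, DifferentiableAt ℂ (f k) s) {s : ℂ} (hs : s ∈ U) :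
    DifferentiableAt ℂ (fun s => ∑' k, f k s) s := by
  obtain ⟨r, hr, hsub, M, hM, hb⟩ := h s hs
  have := Complex.differentiableOn_tsum_of_summable_norm hM
    (fun k z hz => (hd k z (hsub hz)).differentiableWithinAt) Metric.isOpen_ball
    (fun k z hz => hb k z hz)
  exact this.differentiableAt (Metric.ball_mem_nhds s hr)

section
variable {ω : ℕ} {η δ : ℝ}

lemma ak_pos (hω : 1 ≤ ω) {k : ℕ} (hk : 1 ≤ k) : 0 < (k : ℝ) ^ (δ - 1) / ω := by
  have : (0 : ℝ) < k := by exact_mod_cast hk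
  have : (0 : ℝ) < ω := by exact_mod_cast hω
  positivity

lemma ak_le (hω : 1 ≤ ω) (hδ : δ < 1 / 8) {k : ℕ} (hk : 1 ≤ k) : (k : ℝ) ^ (δ - 1) / ω ≤ 1 := by
  have h1 : (1 : ℝ) ≤ k := by exact_mod_cast hk
  have h2 : (1 : ℝ) ≤ ω := by exact_mod_cast hω
  rw [div_le_one (by linarith)]
  exact (Real.rpow_le_one_of_one_le_of_nonpos h1 (by linarith)).trans h2

lemma one_le_of_ak (hω : 1 ≤ ω) (hδ0 : 0 < δ) {k : ℕ} (hk : 1 ≤ k) {u : ℝ}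
    (hu : (k : ℝ) ^ (δ - 1) / ω < u) : 1 ≤ k * ω * u := by
  have h1 : (1 : ℝ) ≤ k := by exact_mod_cast hk
  have h2 : (1 : ℝ) ≤ ω := by exact_mod_cast hω
  have h3 : (k : ℝ) * ω * ((k : ℝ) ^ (δ - 1) / ω) = (k : ℝ) ^ δ := by
    rw [Real.rpow_sub_one (by linarith)]
    field_simp
  have h4 : 1 ≤ (k : ℝ) ^ δ := Real.one_le_rpow h1 hδ0.le
  have : (k : ℝ) * ω * ((k : ℝ) ^ (δ - 1) / ω) ≤ k * ω * u := by gcongr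
  linarith

variable {U : Set ℂ} {φ : ℂ → ℝ → ℂ}

lemma Adm.meas (h : Adm U φ) (hω : 1 ≤ ω) (hδ0 : 0 < δ) {k : ℕ} (hk : 1 ≤ k) {s : ℂ} (hs : s ∈ U) :
    AEStronglyMeasurable (fun u : ℝ => φ s (k * ω * u) * (gg η u : ℂ))
      (volume.restrict (Set.Ioi ((k : ℝ) ^ (δ - 1) / ω))) := by
  refine ContinuousOn.aestronglyMeasurable ?_ measurableSet_Ioi
  apply ContinuousOn.mul
  · refine (h.cont s hs).comp (by fun_prop) (fun u hu => one_le_of_ak hω hδ0 hk hu)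
  · refine Complex.continuous_ofReal.comp_continuousOn ((continuousOn_gg η).mono ?_)
    intro u hu
    exact ((ak_pos hω hk).trans hu).le

lemma bound_pt (hη : 0 < η) (hω : 1 ≤ ω) (hδ0 : 0 < δ) {k : ℕ} (hk : 1 ≤ k) {M p : ℝ} (hM : 0 ≤ M)
    {z : ℂ} (hz : ∀ t : ℝ, 1 ≤ t → ‖φ z t‖ ≤ M * t ^ (-p)) {u : ℝ}
    (hu : (k : ℝ) ^ (δ - 1) / ω < u) :
    ‖φ z (k * ω * u) * (gg η u : ℂ)‖ ≤
      (M * (Real.exp η - 1) * ((k : ℝ) * ω) ^ (-p)) * u ^ (1 - p) := by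
  have hk0 : (0 : ℝ) < k := by exact_mod_cast hk
  have hw0 : (0 : ℝ) < ω := by exact_mod_cast hω
  have hu0 : 0 < u := (ak_pos hω hk).trans hu
  rw [norm_mul, Complex.norm_real, Real.norm_eq_abs, abs_of_nonneg (gg_nonneg hu0.le)]
  calc _ ≤ (M * (k * ω * u) ^ (-p)) * ((Real.exp η - 1) * u) := by
        apply mul_le_mul (hz _ (one_le_of_ak hω hδ0 hk hu)) (gg_le_mul hη.le hu0.le)
          (gg_nonneg hu0.le) (by positivity)
    _ = _ := by
      rw [Real.mul_rpow (by positivity) hu0.le, sub_eq_add_neg 1 p, Real.rpow_add hu0, Real.rpow_one]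
      ring

lemma bound_int (hω : 1 ≤ ω) {k : ℕ} (hk : 1 ≤ k) {p : ℝ} (hp : 2 < p) (c : ℝ) :
    IntegrableOn (fun u : ℝ => c * u ^ (1 - p)) (Set.Ioi ((k : ℝ) ^ (δ - 1) / ω)) :=
  (integrableOn_Ioi_rpow_of_lt (by linarith) (ak_pos hω hk)).const_mul c

lemma Adm.integrable (h : Adm U φ) (hη : 0 < η) (hω : 1 ≤ ω) (hδ0 : 0 < δ) {k : ℕ} (hk : 1 ≤ k)
    {s : ℂ} (hs : s ∈ U) :
    IntegrableOn (fun u : ℝ => φ s (k * ω * u) * (gg η u : ℂ)) (Set.Ioi ((k : ℝ) ^ (δ - 1) / ω)) := by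
  obtain ⟨r, hr, hsub, M, p, hM, hp, hb⟩ := h.bd s hs
  refine (bound_int hω hk hp (M * (Real.exp η - 1) * ((k : ℝ) * ω) ^ (-p))).mono' (h.meas hω hδ0 hk hs) ?_
  exact (ae_restrict_iff' measurableSet_Ioi).2 (ae_of_all _ fun u hu =>
    bound_pt hη hω hδ0 hk hM (hb s (Metric.mem_ball_self hr)) hu)

lemma Adm.differentiableAt (h : Adm U φ) (hη : 0 < η) (hω : 1 ≤ ω) (hδ0 : 0 < δ) {k : ℕ} (hk : 1 ≤ k)
    {s : ℂ} (hs : s ∈ U) : DifferentiableAt ℂ (JJ ω η δ φ k) s := by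
  obtain ⟨r, hr, hsub, M, p, hM, hp, hb⟩ := h.bd s hs
  apply DifferentiableAt.const_mul
  refine diffAt_integral hr _
    (bound_int hω hk hp (M * (Real.exp η - 1) * ((k : ℝ) * ω) ^ (-p))) (fun z hz => h.meas hω hδ0 hk (hsub hz)) ?_ ?_
  · refine (ae_restrict_iff' measurableSet_Ioi).2 (ae_of_all _ fun u hu => ?_)
    exact ((h.diff _ (one_le_of_ak hω hδ0 hk hu)).mono hsub).mul_const _
  · refine (ae_restrict_iff' measurableSet_Ioi).2 (ae_of_all _ fun u hu z hz => ?_)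
    exact bound_pt hη hω hδ0 hk hM (hb z hz) hu

lemma summable_shift {p : ℝ} (hp : p < -1) : Summable (fun k : ℕ => ((k + 1 : ℕ) : ℝ) ^ p) :=
  (summable_nat_add_iff 1).2 (Real.summable_nat_rpow.2 hp)

lemma Adm.lus (h : Adm U φ) (hη : 0 < η) (hω : 1 ≤ ω) (hδ0 : 0 < δ) :
    LUS U (fun k => JJ ω η δ φ (k + 1)) := by
  intro s hs
  obtain ⟨r, hr, hsub, M, p, hM, hp, hb⟩ := h.bd s hs
  refine ⟨r, hr, hsub, fun k => (M * (Real.exp η - 1) / (p - 2) * (ω : ℝ) ^ (1 - 2 : ℝ)) *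
    ((k + 1 : ℕ) : ℝ) ^ (1 - 2 + δ * (2 - p)), ?_, ?_⟩
  · exact (summable_shift (by nlinarith)).mul_left _
  · intro k z hz
    have hk : 1 ≤ k + 1 := by omega
    have hk0 : (0 : ℝ) < ((k + 1 : ℕ) : ℝ) := by exact_mod_cast hk
    have hw0 : (0 : ℝ) < ω := by exact_mod_cast hω
    have hn := norm_integral_le_of_norm_le (bound_int (δ := δ) hω hk hp _)
      ((ae_restrict_iff' measurableSet_Ioi).2 (ae_of_all _ fun u hu =>
        bound_pt (k := k + 1) (p := p) hη hω hδ0 hk hM (hb z hz) hu))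
    rw [integral_const_mul, integral_Ioi_rpow_of_lt (by linarith) (ak_pos hω hk)] at hn
    unfold JJ
    rw [norm_mul]
    have e1 : ‖(((k + 1 : ℕ) : ℂ) * (ω : ℂ))‖ = ((k + 1 : ℕ) : ℝ) * ω := by
      rw [norm_mul, Complex.norm_natCast, Complex.norm_natCast]
    rw [e1]
    refine (mul_le_mul_of_nonneg_left hn (by positivity)).trans (le_of_eq ?_)
    have hkey := rpow_key hk0 hw0 δ p 2
    have e2 : (((k + 1 : ℕ) : ℝ) * ω) ^ (1 - p) = ((k + 1 : ℕ) : ℝ) * ω * (((k + 1 : ℕ) : ℝ) * ω) ^ (-p) := by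
      rw [sub_eq_add_neg, Real.rpow_add (by positivity), Real.rpow_one]
    rw [e2] at hkey
    have e3 : (1 - p + 1) = 2 - p := by ring
    have hp2 : p - 2 ≠ 0 := by linarith
    rw [e3]
    have e4 : ∀ x : ℝ, -x / (2 - p) = x / (p - 2) := by
      intro x
      rw [show 2 - p = -(p - 2) by ring, neg_div_neg_eq]
    rw [e4]
    calc _ = M * (Real.exp η - 1) / (p - 2) * (((k + 1 : ℕ) : ℝ) * ω * (((k + 1 : ℕ) : ℝ) * ω) ^ (-p) *
          (((k + 1 : ℕ) : ℝ) ^ (δ - 1) / ω) ^ (2 - p)) := by ring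
      _ = _ := by rw [hkey]; ring

end


noncomputable def phi0 (s : ℂ) (t : ℝ) : ℂ := (t : ℂ) ^ (-(2 * s))
noncomputable def phiE (s : ℂ) (t : ℝ) : ℂ := ((t ^ 2 - 1 / 4 : ℝ) : ℂ) ^ (-s)
noncomputable def phiR (s : ℂ) (t : ℝ) : ℂ := phiE s t - phi0 s t - (s / 4) * phi0 (s + 1) t

lemma phi0_diff {t : ℝ} (ht : 1 ≤ t) : Differentiable ℂ (fun s => phi0 s t) := by
  have : (fun s => phi0 s t) = fun s => Complex.exp (Real.log t * (-(2 * s))) := by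
    funext s; exact cpow_pos' (by linarith) _
  rw [this]; fun_prop

lemma phiE_diff {t : ℝ} (ht : 1 ≤ t) : Differentiable ℂ (fun s => phiE s t) := by
  have : (fun s => phiE s t) = fun s => Complex.exp (Real.log (t ^ 2 - 1 / 4) * (-s)) := by
    funext s; exact cpow_pos' (by nlinarith) _
  rw [this]; fun_prop

lemma phi0_cont (s : ℂ) : ContinuousOn (phi0 s) (Set.Ici 1) := by
  intro t ht
  have ht : 1 ≤ t := ht
  apply ContinuousAt.continuousWithinAt
  unfold phi0
  refine ContinuousAt.cpow (by fun_prop) (by fun_prop) ?_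
  left; rw [Complex.ofReal_re]; linarith

lemma phiE_cont (s : ℂ) : ContinuousOn (phiE s) (Set.Ici 1) := by
  intro t ht
  have ht : 1 ≤ t := ht
  apply ContinuousAt.continuousWithinAt
  unfold phiE
  refine ContinuousAt.cpow (by fun_prop) (by fun_prop) ?_
  left; rw [Complex.ofReal_re]; nlinarith

lemma ball_re {s z : ℂ} {r : ℝ} (hz : z ∈ Metric.ball s r) : s.re - r < z.re ∧ z.re < s.re + r ∧ ‖z‖ ≤ ‖s‖ + r := by
  rw [Metric.mem_ball, dist_eq_norm] at hz
  have h1 := (Complex.abs_re_le_norm (z - s)).trans_lt hz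
  rw [Complex.sub_re, abs_lt] at h1
  refine ⟨by linarith, by linarith, ?_⟩
  have := norm_sub_norm_le z s
  linarith

lemma norm_phi0 (s : ℂ) {t : ℝ} (ht : 1 ≤ t) : ‖phi0 s t‖ = t ^ (-(2 * s.re)) := by
  unfold phi0
  rw [Complex.norm_cpow_eq_rpow_re_of_pos (by linarith)]
  simp

lemma adm_phi0 : Adm {s : ℂ | 1 < s.re} phi0 where
  diff t ht := (phi0_diff ht).differentiableOn
  cont s _ := phi0_cont s
  bd s hs := by
    have hs : 1 < s.re := hs
    refine ⟨(s.re - 1) / 2, by linarith, ?_, 1, s.re + 1, zero_le_one, by linarith, ?_⟩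
    · intro z hz
      have := (ball_re hz).1
      show 1 < z.re
      linarith
    · intro z hz t ht
      rw [norm_phi0 _ ht, one_mul]
      apply Real.rpow_le_rpow_of_exponent_le ht
      have := (ball_re hz).1
      linarith

lemma adm_phiE : Adm {s : ℂ | 1 < s.re} phiE where
  diff t ht := (phiE_diff ht).differentiableOn
  cont s _ := phiE_cont s
  bd s hs := by
    have hs : 1 < s.re := hs
    refine ⟨(s.re - 1) / 2, by linarith, ?_, (3 / 4 : ℝ) ^ (-(s.re + (s.re - 1) / 2)), s.re + 1,
      by positivity, by linarith, ?_⟩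
    · intro z hz
      have := (ball_re hz).1
      show 1 < z.re
      linarith
    · intro z hz t ht
      have h1 := (ball_re hz).1
      have h2 := (ball_re hz).2.1
      unfold phiE
      have hp : 0 < t ^ 2 - 1 / 4 := by nlinarith
      rw [Complex.norm_cpow_eq_rpow_re_of_pos hp, Complex.neg_re]
      calc (t ^ 2 - 1 / 4) ^ (-z.re) ≤ (3 / 4 * t ^ 2) ^ (-z.re) := by
            apply Real.rpow_le_rpow_of_nonpos (by positivity) (by nlinarith) (by linarith)
        _ = (3 / 4 : ℝ) ^ (-z.re) * t ^ (-(2 * z.re)) := by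
            rw [Real.mul_rpow (by norm_num) (by positivity), ← Real.rpow_natCast,
              ← Real.rpow_mul (by linarith)]
            norm_num
        _ ≤ _ := by
            gcongr ?_ * ?_
            · apply Real.rpow_le_rpow_of_exponent_ge (by norm_num) (by norm_num)
              linarith
            · apply Real.rpow_le_rpow_of_exponent_le ht
              linarith

lemma taylor_bound {z : ℂ} {x m : ℝ} (hm : ‖z‖ ≤ m) (hx0 : 0 ≤ x) (hx : x ≤ 1 / 4) :
    ‖Complex.exp (Real.log (1 - x) * (-z)) - 1 - z * x‖ ≤
      (4 * m ^ 2 * Real.exp m + 2 * m) * x ^ 2 := by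
  have hm0 : 0 ≤ m := (norm_nonneg z).trans hm
  set y := -Real.log (1 - x) with hy
  have hy1 : x ≤ y := by
    have := Real.log_le_sub_one_of_pos (by linarith : 0 < 1 - x)
    linarith
  have hy2 : y ≤ x + 2 * x ^ 2 := by
    have := Real.one_sub_inv_le_log_of_pos (by linarith : 0 < 1 - x)
    have h2 : (1 - x)⁻¹ ≤ 1 + x + 2 * x ^ 2 := by
      rw [inv_le_iff_one_le_mul₀ (by linarith)]
      nlinarith [mul_nonneg hx0 hx0, mul_nonneg (mul_nonneg hx0 hx0) hx0]
    linarith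
  have e : Complex.exp (Real.log (1 - x) * (-z)) - 1 - z * x =
      (Complex.exp (z * y) - 1 - z * y) + z * ((y - x : ℝ) : ℂ) := by
    have : (Real.log (1 - x) : ℂ) * (-z) = z * y := by rw [hy]; push_cast; ring
    rw [this]; push_cast; ring
  have h1 := Complex.norm_exp_sub_sum_le_norm_mul_exp (z * y) 2
  simp only [Finset.sum_range_succ, Finset.sum_range_zero, zero_add, pow_zero, pow_one,
    Nat.factorial_zero, Nat.factorial_one, Nat.cast_one, div_one] at h1
  rw [← sub_sub] at h1
  have hn : ‖z * (y : ℂ)‖ ≤ m * (2 * x) := by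
    rw [norm_mul, Complex.norm_real, Real.norm_eq_abs, abs_of_nonneg (by linarith)]
    have : y ≤ 2 * x := by nlinarith
    have : 0 ≤ y := by linarith
    gcongr
  have hn2 : ‖z * (y : ℂ)‖ ≤ m := hn.trans (by nlinarith)
  have h3 : ‖z * ((y - x : ℝ) : ℂ)‖ ≤ m * (2 * x ^ 2) := by
    rw [norm_mul, Complex.norm_real, Real.norm_eq_abs, abs_of_nonneg (by linarith)]
    gcongr; linarith
  rw [e]
  calc _ ≤ _ := norm_add_le _ _
    _ ≤ (m * (2 * x)) ^ 2 * Real.exp m + m * (2 * x ^ 2) := by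
      gcongr
      refine h1.trans ?_
      gcongr
    _ = _ := by ring

lemma phiR_eq (s : ℂ) {t : ℝ} (ht : 1 ≤ t) : phiR s t = phi0 s t *
    (Complex.exp (Real.log (1 - 1 / (4 * t ^ 2)) * (-s)) - 1 - s * ((1 / (4 * t ^ 2) : ℝ) : ℂ)) := by
  have ht0 : 0 < t := by linarith
  have h1 : phiE s t = phi0 s t * Complex.exp (Real.log (1 - 1 / (4 * t ^ 2)) * (-s)) := by
    have hx : 0 < 1 - 1 / (4 * t ^ 2) := by
      rw [sub_pos, div_lt_one (by positivity)]; nlinarith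
    unfold phiE phi0
    rw [cpow_pos' (by nlinarith), cpow_pos' ht0, ← Complex.exp_add]
    have : t ^ 2 - 1 / 4 = t ^ 2 * (1 - 1 / (4 * t ^ 2)) := by field_simp
    rw [this, Real.log_mul (by positivity) hx.ne', Real.log_pow]
    congr 1
    push_cast
    ring
  have h2 : phi0 (s + 1) t = phi0 s t * ((1 / t ^ 2 : ℝ) : ℂ) := by
    unfold phi0
    have ht' : (t : ℂ) ≠ 0 := by exact_mod_cast ht0.ne'
    rw [show -(2 * (s + 1)) = -(2 * s) - (2 : ℕ) by push_cast; ring, Complex.cpow_sub _ _ ht',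
      Complex.cpow_natCast]
    push_cast
    field_simp
  unfold phiR
  rw [h1, h2]
  push_cast
  field_simp

lemma adm_phiR : Adm {s : ℂ | -1 < s.re} phiR where
  diff t ht := by
    have h1 := phiE_diff ht
    have h2 := phi0_diff ht
    have h3 : Differentiable ℂ (fun s : ℂ => phi0 (s + 1) t) := h2.comp (by fun_prop)
    unfold phiR
    apply Differentiable.differentiableOn
    fun_prop
  cont s _ := by
    unfold phiR
    exact ((phiE_cont s).sub (phi0_cont s)).sub (continuousOn_const.mul (phi0_cont _))
  bd s hs := by
    have hs : -1 < s.re := hs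
    set r := (s.re + 1) / 2 with hr
    have hm : 0 ≤ ‖s‖ + r := by have := norm_nonneg s; linarith
    refine ⟨r, by linarith, ?_, (4 * (‖s‖ + r) ^ 2 * Real.exp (‖s‖ + r) + 2 * (‖s‖ + r)), s.re + 3,
      by positivity, by linarith, ?_⟩
    · intro z hz
      have := (ball_re hz).1
      show -1 < z.re
      linarith
    · intro z hz t ht
      have h1 := (ball_re hz).1
      have ht0 : 0 < t := by linarith
      rw [phiR_eq z ht, norm_mul, norm_phi0 _ ht]
      have hx : 1 / (4 * t ^ 2) ≤ 1 / 4 := by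
        rw [div_le_div_iff₀ (by positivity) (by norm_num)]; nlinarith
      have hT := taylor_bound (ball_re hz).2.2 (by positivity : 0 ≤ 1 / (4 * t ^ 2)) hx
      have e1 : (1 / (4 * t ^ 2)) ^ 2 ≤ t ^ (-4 : ℝ) := by
        rw [Real.rpow_neg ht0.le, ← one_div]
        norm_cast
        rw [div_pow, one_pow]
        apply div_le_div_of_nonneg_left (by norm_num) (by positivity)
        rw [mul_pow, ← pow_mul]
        have := pow_pos ht0 4
        norm_num
        linarith
      calc _ ≤ t ^ (-(2 * z.re)) * ((4 * (‖s‖ + r) ^ 2 * Real.exp (‖s‖ + r) + 2 * (‖s‖ + r)) * t ^ (-4 : ℝ)) := by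
            gcongr
            exact hT.trans (by gcongr)
        _ = (4 * (‖s‖ + r) ^ 2 * Real.exp (‖s‖ + r) + 2 * (‖s‖ + r)) * t ^ (-(2 * z.re) + (-4)) := by
            rw [Real.rpow_add ht0]; ring
        _ ≤ _ := by
            gcongr
            linarith

lemma phiR_zero (t : ℝ) : phiR 0 t = 0 := by
  unfold phiR phiE phi0
  simp

section
variable {ω : ℕ} {η δ : ℝ}

lemma coneE_eq (coneE1 : ℕ → ℝ → ℝ → ℕ → ℂ → ℂ)
    (hdef : ∀ ω η δ k s, coneE1 ω η δ k s =
      (2 * Complex.sin ((Real.pi : ℂ) * s) / (Real.pi : ℂ)) * ((k : ℂ) * (ω : ℂ)) *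
    ∫ u in Set.Ioi ((k : ℝ) ^ (δ - 1) / ω),
      (((k : ℝ) ^ 2 * (ω : ℝ) ^ 2 * u ^ 2 - 1 / 4 : ℝ) : ℂ) ^ (-s) *
        ((Real.log (u * Real.cosh η + Real.sqrt (1 + u ^ 2 * Real.sinh η ^ 2)) -
          Real.log (u + 1) : ℝ) : ℂ)) (k : ℕ) (s : ℂ) :
    coneE1 ω η δ k s = (2 * Complex.sin ((Real.pi : ℂ) * s) / (Real.pi : ℂ)) * JJ ω η δ phiE k s := by
  rw [hdef, mul_assoc]
  unfold JJ phiE gg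
  simp only [mul_pow]

lemma JJ_split (hη : 0 < η) (hω : 1 ≤ ω) (hδ0 : 0 < δ) {k : ℕ} (hk : 1 ≤ k) {s : ℂ} (hs : 1 < s.re) :
    JJ ω η δ phiE k s = JJ ω η δ phi0 k s + s / 4 * JJ ω η δ phi0 k (s + 1) + JJ ω η δ phiR k s := by
  have i0 := adm_phi0.integrable hη hω hδ0 hk (s := s) hs
  have i1 := adm_phi0.integrable hη hω hδ0 hk (s := s + 1) (by show 1 < (s + 1).re; simp; linarith)
  have iR := adm_phiR.integrable hη hω hδ0 hk (s := s) (by show -1 < s.re; linarith)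
  unfold JJ
  have e : ∀ u : ℝ, phiE s (k * ω * u) * (gg η u : ℂ) = phi0 s (k * ω * u) * (gg η u : ℂ) +
      s / 4 * (phi0 (s + 1) (k * ω * u) * (gg η u : ℂ)) + phiR s (k * ω * u) * (gg η u : ℂ) := by
    intro u; unfold phiR; ring
  simp only [e]
  have i01 : IntegrableOn (fun u : ℝ => phi0 s (k * ω * u) * (gg η u : ℂ) +
      s / 4 * (phi0 (s + 1) (k * ω * u) * (gg η u : ℂ))) (Set.Ioi ((k : ℝ) ^ (δ - 1) / ω)) :=
    i0.add (i1.const_mul _)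
  rw [integral_add i01 iR, integral_add i0 (i1.const_mul _), integral_const_mul]
  ring

end


lemma continuousOn_cpow_mul {f : ℝ → ℝ} (hf : ContinuousOn f (Set.Ioi 0)) (w : ℂ) :
    ContinuousOn (fun u : ℝ => (u : ℂ) ^ (-w) * (f u : ℂ)) (Set.Ioi 0) := by
  apply ContinuousOn.mul
  · intro u hu
    apply ContinuousAt.continuousWithinAt
    refine ContinuousAt.cpow (by fun_prop) (by fun_prop) ?_
    left; rw [Complex.ofReal_re]; exact hu
  · exact Complex.continuous_ofReal.comp_continuousOn hf

lemma continuousOn_hh (η : ℝ) : ContinuousOn (hh η) (Set.Ioi 0) := by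
  unfold hh
  exact ((continuousOn_gg η).mono Set.Ioi_subset_Ici_self).sub (by fun_prop)

lemma norm_cpow_mul (w : ℂ) {u : ℝ} (hu : 0 < u) (x : ℝ) :
    ‖(u : ℂ) ^ (-w) * (x : ℂ)‖ = u ^ (-w.re) * |x| := by
  rw [norm_mul, Complex.norm_cpow_eq_rpow_re_of_pos hu, Complex.norm_real, Real.norm_eq_abs,
    Complex.neg_re]

lemma cpow_diff {u : ℝ} (hu : 0 < u) (x : ℂ) : Differentiable ℂ (fun w : ℂ => (u : ℂ) ^ (-w) * x) := by
  have : (fun w : ℂ => (u : ℂ) ^ (-w) * x) = fun w => Complex.exp (Real.log u * (-w)) * x := by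
    funext s; rw [cpow_pos' hu]
  rw [this]; fun_prop

lemma PP_pt (η : ℝ) (w : ℂ) {u : ℝ} (hu : 0 < u) (hu1 : u ≤ 1) :
    ‖(u : ℂ) ^ (-w) * (hh η u : ℂ)‖ ≤ KK η * u ^ (3 - w.re) := by
  rw [norm_cpow_mul _ hu]
  calc _ ≤ u ^ (-w.re) * (KK η * u ^ 3) := by
        gcongr; exact hh_bound hu.le hu1
    _ = _ := by
      rw [sub_eq_add_neg, Real.rpow_add hu]
      norm_cast
      ring

lemma rpow_int {q a : ℝ} (hq : q < 4) (ha : 0 ≤ a) (c : ℝ) :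
    IntegrableOn (fun u : ℝ => c * u ^ (3 - q)) (Set.Ioc 0 a) := by
  have h := intervalIntegral.intervalIntegrable_rpow' (a := 0) (b := a) (by linarith : -1 < 3 - q)
  rw [intervalIntegrable_iff_integrableOn_Ioc_of_le ha] at h
  exact h.const_mul c

lemma PP_integrable (η : ℝ) {w : ℂ} (hw : w.re < 4) {a : ℝ} (ha : 0 ≤ a) (ha1 : a ≤ 1) :
    IntegrableOn (fun u : ℝ => (u : ℂ) ^ (-w) * (hh η u : ℂ)) (Set.Ioc 0 a) := by
  refine (rpow_int hw ha (KK η)).mono' ?_ ?_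
  · exact ((continuousOn_cpow_mul (continuousOn_hh η) w).mono Set.Ioc_subset_Ioi_self).aestronglyMeasurable
      measurableSet_Ioc
  · exact (ae_restrict_iff' measurableSet_Ioc).2 (ae_of_all _ fun u hu =>
      PP_pt η w hu.1 (hu.2.trans ha1))

lemma PP_bound (η : ℝ) {w : ℂ} (hw : w.re < 4) {a : ℝ} (ha : 0 ≤ a) (ha1 : a ≤ 1) :
    ‖PP η w a‖ ≤ KK η * (a ^ (4 - w.re) / (4 - w.re)) := by
  have h := norm_integral_le_of_norm_le (rpow_int hw ha (KK η))
    ((ae_restrict_iff' measurableSet_Ioc).2 (ae_of_all _ fun u hu =>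
      PP_pt η w hu.1 (hu.2.trans ha1)))
  refine h.trans (le_of_eq ?_)
  rw [← intervalIntegral.integral_of_le ha, intervalIntegral.integral_const_mul,
    integral_rpow (Or.inl (by linarith))]
  rw [show 3 - w.re + 1 = 4 - w.re by ring, Real.zero_rpow (by linarith), sub_zero]

lemma PP_diff (η : ℝ) {w : ℂ} (hw : w.re < 4) {a : ℝ} (ha : 0 ≤ a) (ha1 : a ≤ 1) :
    DifferentiableAt ℂ (fun w => PP η w a) w := by
  unfold PP
  refine diffAt_integral (r := (4 - w.re) / 2) (by linarith) _
    (rpow_int (q := w.re + (4 - w.re) / 2) (by linarith) ha (KK η)) ?_ ?_ ?_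
  · intro z _
    exact ((continuousOn_cpow_mul (continuousOn_hh η) z).mono Set.Ioc_subset_Ioi_self).aestronglyMeasurable
      measurableSet_Ioc
  · exact (ae_restrict_iff' measurableSet_Ioc).2 (ae_of_all _ fun u hu =>
      (cpow_diff hu.1 _).differentiableOn)
  · refine (ae_restrict_iff' measurableSet_Ioc).2 (ae_of_all _ fun u hu z hz => ?_)
    refine (PP_pt η z hu.1 (hu.2.trans ha1)).trans ?_
    have := KK_nonneg η
    gcongr ?_ * ?_
    apply Real.rpow_le_rpow_of_exponent_ge hu.1 (hu.2.trans ha1)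
    have := (ball_re hz).2.1
    linarith

lemma BB_pt {η : ℝ} (hη : 0 < η) (w : ℂ) {u : ℝ} (hu : 1 < u) :
    ‖(u : ℂ) ^ (-w) * ((gg η u - η + 1 / u : ℝ) : ℂ)‖ ≤ (1 + 1 / Real.sinh η) * u ^ (-2 - w.re) := by
  have hu0 : 0 < u := by linarith
  rw [norm_cpow_mul _ hu0]
  have := gg_inf hη hu.le
  rw [abs_of_nonneg this.1]
  calc _ ≤ u ^ (-w.re) * ((1 + 1 / Real.sinh η) * u ^ (-2 : ℝ)) := by
        gcongr; exact this.2
    _ = _ := by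
      rw [sub_eq_add_neg, Real.rpow_add hu0]
      ring

lemma BB_integrable {η : ℝ} (hη : 0 < η) {w : ℂ} (hw : -1 < w.re) :
    IntegrableOn (fun u : ℝ => (u : ℂ) ^ (-w) * ((gg η u - η + 1 / u : ℝ) : ℂ)) (Set.Ioi 1) := by
  refine ((integrableOn_Ioi_rpow_of_lt (by linarith : -2 - w.re < -1) one_pos).const_mul
      (1 + 1 / Real.sinh η)).mono' ?_ ?_
  · exact ((continuousOn_cpow_mul (continuousOn_gginf η) w).mono
      (Set.Ioi_subset_Ioi zero_le_one)).aestronglyMeasurable measurableSet_Ioi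
  · exact (ae_restrict_iff' measurableSet_Ioi).2 (ae_of_all _ fun u hu => BB_pt hη w hu)

lemma BB_diff {η : ℝ} (hη : 0 < η) {w : ℂ} (hw : -1 < w.re) : DifferentiableAt ℂ (BB η) w := by
  have hS : 0 < Real.sinh η := Real.sinh_pos_iff.2 hη
  unfold BB
  refine diffAt_integral (r := (w.re + 1) / 2) (by linarith) _
    ((integrableOn_Ioi_rpow_of_lt (by linarith : -2 - (w.re - (w.re + 1) / 2) < -1) one_pos).const_mul
      (1 + 1 / Real.sinh η)) ?_ ?_ ?_
  · intro z _
    exact ((continuousOn_cpow_mul (continuousOn_gginf η) z).mono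
      (Set.Ioi_subset_Ioi zero_le_one)).aestronglyMeasurable measurableSet_Ioi
  · exact (ae_restrict_iff' measurableSet_Ioi).2 (ae_of_all _ fun u hu =>
      (cpow_diff (zero_lt_one.trans hu) _).differentiableOn)
  · refine (ae_restrict_iff' measurableSet_Ioi).2 (ae_of_all _ fun u hu z hz => ?_)
    refine (BB_pt hη z hu).trans ?_
    gcongr ?_ * ?_
    apply Real.rpow_le_rpow_of_exponent_le (le_of_lt hu)
    have := (ball_re hz).1
    linarith

/-- `∫_1^∞ u^{-w} g` -/
lemma Ioi_one_gg {η : ℝ} (hη : 0 < η) {w : ℂ} (hw : 1 < w.re) :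
    IntegrableOn (fun u : ℝ => (u : ℂ) ^ (-w) * (gg η u : ℂ)) (Set.Ioi 1) ∧
    ∫ u in Set.Ioi (1 : ℝ), (u : ℂ) ^ (-w) * (gg η u : ℂ) = BB η w + η / (w - 1) - 1 / w := by
  have iB := BB_integrable hη (w := w) (by linarith)
  have i1 : IntegrableOn (fun u : ℝ => (u : ℂ) ^ (-w)) (Set.Ioi 1) :=
    integrableOn_Ioi_cpow_of_lt (by simpa using hw) one_pos
  have i2 : IntegrableOn (fun u : ℝ => (u : ℂ) ^ (-w - 1)) (Set.Ioi 1) :=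
    integrableOn_Ioi_cpow_of_lt (by simp; linarith) one_pos
  have e : Set.EqOn (fun u : ℝ => (u : ℂ) ^ (-w) * (gg η u : ℂ)) (fun u : ℝ =>
      ((u : ℂ) ^ (-w) * ((gg η u - η + 1 / u : ℝ) : ℂ) + η * (u : ℂ) ^ (-w)) - (u : ℂ) ^ (-w - 1))
      (Set.Ioi 1) := by
    intro u hu
    have hu : 1 < u := hu
    have h0 : (u : ℂ) ≠ 0 := by exact_mod_cast (by linarith : u ≠ 0)
    simp only
    rw [Complex.cpow_sub _ _ h0, Complex.cpow_one]
    push_cast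
    field_simp
    ring
  have iB1 : IntegrableOn (fun u : ℝ => (u : ℂ) ^ (-w) * ((gg η u - η + 1 / u : ℝ) : ℂ) + η * (u : ℂ) ^ (-w))
    (Set.Ioi 1) := iB.add (i1.const_mul _)
  refine ⟨(iB1.sub i2).congr_fun e.symm measurableSet_Ioi, ?_⟩
  rw [setIntegral_congr_fun measurableSet_Ioi e, integral_sub iB1 i2, integral_add iB (i1.const_mul _),
    integral_const_mul, integral_Ioi_cpow_of_lt (by simpa using hw) one_pos,
    integral_Ioi_cpow_of_lt (by simp; linarith) one_pos]
  simp only [Complex.ofReal_one, Complex.one_cpow]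
  have h1 : w - 1 ≠ 0 := by
    intro h; rw [sub_eq_zero] at h; rw [h] at hw; simp at hw
  have h2 : w ≠ 0 := by
    intro h; rw [h] at hw; simp at hw; linarith
  rw [show -w + 1 = -(w - 1) by ring, show -w - 1 + 1 = -w by ring]
  unfold BB
  rw [neg_div_neg_eq, neg_div_neg_eq]
  ring

noncomputable def GG (η : ℝ) (w : ℂ) : ℂ :=
  PP η w 1 + BB η w - ((Real.cosh η - 1 : ℝ) : ℂ) / (w - 2) + η / (w - 1) - 1 / w

lemma Ioi_gg {η : ℝ} (hη : 0 < η) {w : ℂ} (hw : 2 < w.re) (hw4 : w.re < 4) {a : ℝ} (ha : 0 < a)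
    (ha1 : a ≤ 1) :
    ∫ u in Set.Ioi a, (u : ℂ) ^ (-w) * (gg η u : ℂ) =
      GG η w - PP η w a + ((Real.cosh η - 1 : ℝ) : ℂ) / (w - 2) * (a : ℂ) ^ (2 - w) := by
  obtain ⟨i1, e1⟩ := Ioi_one_gg hη (w := w) (by linarith)
  have ic : ∀ b : ℝ, 0 < b → IntegrableOn (fun u : ℝ => ((Real.cosh η - 1 : ℝ) : ℂ) * (u : ℂ) ^ (1 - w))
      (Set.Ioi b) := fun b hb =>
    (integrableOn_Ioi_cpow_of_lt (by simp; linarith) hb).const_mul _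
  have vc : ∀ b : ℝ, 0 < b → ∫ u in Set.Ioi b, ((Real.cosh η - 1 : ℝ) : ℂ) * (u : ℂ) ^ (1 - w) =
      ((Real.cosh η - 1 : ℝ) : ℂ) / (w - 2) * (b : ℂ) ^ (2 - w) := by
    intro b hb
    rw [integral_const_mul, integral_Ioi_cpow_of_lt (by simp; linarith) hb,
      show 1 - w + 1 = 2 - w by ring, ← neg_sub w 2, neg_div_neg_eq, ]
    ring
  have eh : ∀ u : ℝ, 0 < u → (u : ℂ) ^ (-w) * (hh η u : ℂ) = (u : ℂ) ^ (-w) * (gg η u : ℂ) -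
      ((Real.cosh η - 1 : ℝ) : ℂ) * (u : ℂ) ^ (1 - w) := by
    intro u hu
    have h0 : (u : ℂ) ≠ 0 := by exact_mod_cast hu.ne'
    rw [sub_eq_add_neg 1 w, Complex.cpow_add _ _ h0, Complex.cpow_one]
    unfold hh
    push_cast
    ring
  have ih1 : IntegrableOn (fun u : ℝ => (u : ℂ) ^ (-w) * (hh η u : ℂ)) (Set.Ioi 1) :=
    (i1.sub (ic 1 one_pos)).congr_fun (fun u hu => (eh u (zero_lt_one.trans hu)).symm) measurableSet_Ioi
  have vh1 : ∫ u in Set.Ioi (1 : ℝ), (u : ℂ) ^ (-w) * (hh η u : ℂ) =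
      BB η w + η / (w - 1) - 1 / w - ((Real.cosh η - 1 : ℝ) : ℂ) / (w - 2) := by
    rw [setIntegral_congr_fun measurableSet_Ioi (fun u hu => eh u (zero_lt_one.trans hu)),
      integral_sub i1 (ic 1 one_pos), e1, vc 1 one_pos]
    simp
  have ih01 := PP_integrable η hw4 zero_le_one le_rfl
  have ih0 : IntegrableOn (fun u : ℝ => (u : ℂ) ^ (-w) * (hh η u : ℂ)) (Set.Ioi 0) := by
    rw [← Set.Ioc_union_Ioi_eq_Ioi (zero_le_one (α := ℝ))]
    exact ih01.union ih1
  have vh0 : ∫ u in Set.Ioi (0 : ℝ), (u : ℂ) ^ (-w) * (hh η u : ℂ) = GG η w := by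
    rw [← Set.Ioc_union_Ioi_eq_Ioi (zero_le_one (α := ℝ)),
      setIntegral_union (Set.Ioc_disjoint_Ioi le_rfl) measurableSet_Ioi ih01 ih1, vh1]
    unfold GG PP
    ring
  have iha : IntegrableOn (fun u : ℝ => (u : ℂ) ^ (-w) * (hh η u : ℂ)) (Set.Ioi a) :=
    ih0.mono_set (Set.Ioi_subset_Ioi ha.le)
  have vha : ∫ u in Set.Ioi a, (u : ℂ) ^ (-w) * (hh η u : ℂ) = GG η w - PP η w a := by
    rw [← vh0, ← Set.Ioc_union_Ioi_eq_Ioi ha.le,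
      setIntegral_union (Set.Ioc_disjoint_Ioi le_rfl) measurableSet_Ioi
        (PP_integrable η hw4 ha.le ha1) iha]
    unfold PP
    ring
  rw [← vha, ← vc a ha, ← integral_add iha (ic a ha)]
  refine setIntegral_congr_fun measurableSet_Ioi (fun u hu => ?_)
  rw [eh u (ha.trans hu)]
  ring

section
variable {ω : ℕ} {η δ : ℝ}

noncomputable def QQ (ω : ℕ) (η δ : ℝ) (k : ℕ) (s : ℂ) : ℂ :=
  ((k * ω : ℝ) : ℂ) ^ (1 - 2 * s) * PP η (2 * s) ((k : ℝ) ^ (δ - 1) / ω)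

lemma QQ_bound (hω : 1 ≤ ω) (hδ0 : 0 < δ) (hδ : δ < 1 / 8) {k : ℕ} (hk : 1 ≤ k) {s : ℂ}
    (hs : -(1 / 2) < s.re) (hs2 : s.re < 2) :
    ‖QQ ω η δ k s‖ ≤ KK η / (4 - 2 * s.re) * (k : ℝ) ^ (-2 : ℝ) := by
  have h1 : (1 : ℝ) ≤ k := by exact_mod_cast hk
  have h2 : (1 : ℝ) ≤ ω := by exact_mod_cast hω
  have hre : (2 * s).re = 2 * s.re := by simp
  have hp : 0 < (k : ℝ) * ω := by positivity
  unfold QQ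
  rw [norm_mul, Complex.norm_cpow_eq_rpow_re_of_pos hp]
  have hP := PP_bound η (w := 2 * s) (by rw [hre]; linarith) (ak_pos (δ := δ) hω hk).le (ak_le hω hδ hk)
  rw [hre] at hP
  have hre2 : (1 - 2 * s).re = 1 - 2 * s.re := by simp
  rw [hre2]
  have hK := KK_nonneg η
  calc _ ≤ ((k : ℝ) * ω) ^ (1 - 2 * s.re) *
        (KK η * (((k : ℝ) ^ (δ - 1) / ω) ^ (4 - 2 * s.re) / (4 - 2 * s.re))) := by gcongr
    _ = KK η / (4 - 2 * s.re) * (((k : ℝ) * ω) ^ (1 - 2 * s.re) *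
        ((k : ℝ) ^ (δ - 1) / ω) ^ (4 - 2 * s.re)) := by ring
    _ = KK η / (4 - 2 * s.re) * ((k : ℝ) ^ (1 - 4 + δ * (4 - 2 * s.re)) * (ω : ℝ) ^ (1 - 4 : ℝ)) := by
        rw [rpow_key (by linarith) (by linarith)]
    _ ≤ KK η / (4 - 2 * s.re) * ((k : ℝ) ^ (-2 : ℝ) * 1) := by
        have : 0 ≤ KK η / (4 - 2 * s.re) := div_nonneg hK (by linarith)
        gcongr
        · nlinarith
        · exact Real.rpow_le_one_of_one_le_of_nonpos h2 (by norm_num)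
    _ = _ := by ring

lemma QQ_diff (hω : 1 ≤ ω) (hδ : δ < 1 / 8) {k : ℕ} (hk : 1 ≤ k) {s : ℂ}
    (hs2 : s.re < 2) : DifferentiableAt ℂ (QQ ω η δ k) s := by
  have h1 : (1 : ℝ) ≤ k := by exact_mod_cast hk
  have h2 : (1 : ℝ) ≤ ω := by exact_mod_cast hω
  unfold QQ
  apply DifferentiableAt.mul
  · refine DifferentiableAt.const_cpow (by fun_prop) (Or.inl ?_)
    exact_mod_cast (by positivity : (k : ℝ) * ω ≠ 0)
  · have := PP_diff η (w := 2 * s) (by simp; linarith) (ak_pos (δ := δ) hω hk).le (ak_le hω hδ hk)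
    exact this.comp s (by fun_prop : DifferentiableAt ℂ (fun s : ℂ => 2 * s) s)

lemma QQ_lus (hω : 1 ≤ ω) (hδ0 : 0 < δ) (hδ : δ < 1 / 8) :
    LUS {s : ℂ | -(1 / 2) < s.re ∧ s.re < 2} (fun k => QQ ω η δ (k + 1)) := by
  rintro s ⟨hs1, hs2⟩
  have hr : 0 < min ((2 - s.re) / 2) (s.re + 1 / 2) := lt_min (by linarith) (by linarith)
  have m1 := min_le_left ((2 - s.re) / 2) (s.re + 1 / 2)
  have m2 := min_le_right ((2 - s.re) / 2) (s.re + 1 / 2)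
  refine ⟨_, hr, ?_, fun k => KK η / (2 - s.re) * ((k + 1 : ℕ) : ℝ) ^ (-2 : ℝ), ?_, ?_⟩
  · intro z hz
    obtain ⟨a, b, -⟩ := ball_re hz
    exact ⟨by linarith, by linarith⟩
  · exact (summable_shift (by norm_num)).mul_left _
  · intro k z hz
    obtain ⟨a, b, -⟩ := ball_re hz
    refine (QQ_bound hω hδ0 hδ (by omega) (by linarith) (by linarith)).trans ?_
    have := KK_nonneg η
    exact mul_le_mul_of_nonneg_right (div_le_div_of_nonneg_left this (by linarith) (by linarith))
      (by positivity)

noncomputable def QS (ω : ℕ) (η δ : ℝ) (s : ℂ) : ℂ := ∑' k : ℕ, QQ ω η δ (k + 1) s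

lemma QS_diff (hω : 1 ≤ ω) (hδ0 : 0 < δ) (hδ : δ < 1 / 8) {s : ℂ}
    (hs : -(1 / 2) < s.re) (hs2 : s.re < 2) : DifferentiableAt ℂ (QS ω η δ) s :=
  (QQ_lus hω hδ0 hδ).differentiableAt (fun k z hz => QQ_diff hω hδ (by omega) hz.2) ⟨hs, hs2⟩

lemma hasSum_zeta {z : ℂ} (hz : 1 < z.re) :
    HasSum (fun k : ℕ => (((k + 1 : ℕ) : ℝ) : ℂ) ^ (-z)) (riemannZeta z) := by
  have h1 := (Complex.summable_one_div_nat_cpow (p := z)).2 hz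
  have h2 := (summable_nat_add_iff 1).2 h1
  rw [zeta_eq_tsum_one_div_nat_add_one_cpow hz]
  convert! h2.hasSum using 2 with k
  · rw [Complex.cpow_neg, one_div]
    push_cast; rfl
  · simp

noncomputable def TF (ω : ℕ) (η δ : ℝ) (s : ℂ) : ℂ :=
  (ω : ℂ) ^ (1 - 2 * s) * riemannZeta (2 * s - 1) * GG η (2 * s) - QS ω η δ s +
    ((Real.cosh η - 1 : ℝ) : ℂ) / (2 * s - 2) * (ω : ℂ) ^ (1 - 2 : ℂ) * riemannZeta (1 - δ * (2 - 2 * s))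

lemma JJ_phi0 (hη : 0 < η) (hω : 1 ≤ ω) (hδ : δ < 1 / 8) {k : ℕ} (hk : 1 ≤ k) {s : ℂ}
    (hs : 1 < s.re) (hs2 : s.re < 2) :
    JJ ω η δ phi0 k s = (ω : ℂ) ^ (1 - 2 * s) * GG η (2 * s) * ((k : ℝ) : ℂ) ^ (-(2 * s - 1)) -
      QQ ω η δ k s + ((Real.cosh η - 1 : ℝ) : ℂ) / (2 * s - 2) * (ω : ℂ) ^ (1 - 2 : ℂ) *
        ((k : ℝ) : ℂ) ^ (-(1 - δ * (2 - 2 * s))) := by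
  have h1 : (1 : ℝ) ≤ k := by exact_mod_cast hk
  have h2 : (1 : ℝ) ≤ ω := by exact_mod_cast hω
  have hp : 0 < (k : ℝ) * ω := by positivity
  have ha := ak_pos (δ := δ) hω hk
  have e1 : JJ ω η δ phi0 k s = ((k * ω : ℝ) : ℂ) ^ (1 - 2 * s) *
      ∫ u in Set.Ioi ((k : ℝ) ^ (δ - 1) / ω), (u : ℂ) ^ (-(2 * s)) * (gg η u : ℂ) := by
    unfold JJ
    have : ∀ u ∈ Set.Ioi ((k : ℝ) ^ (δ - 1) / ω), phi0 s (k * ω * u) * (gg η u : ℂ) =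
        ((k * ω : ℝ) : ℂ) ^ (-(2 * s)) * ((u : ℂ) ^ (-(2 * s)) * (gg η u : ℂ)) := by
      intro u hu
      unfold phi0
      rw [Complex.ofReal_mul (k * ω : ℝ) u, Complex.mul_cpow_ofReal_nonneg hp.le (ha.trans hu).le]
      ring
    rw [setIntegral_congr_fun measurableSet_Ioi this, integral_const_mul, ← mul_assoc]
    congr 1
    have hne : ((k * ω : ℝ) : ℂ) ≠ 0 := by exact_mod_cast hp.ne'
    rw [sub_eq_add_neg, Complex.cpow_add _ _ hne, Complex.cpow_one]
    push_cast; rfl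
  rw [e1, Ioi_gg hη (by simp; linarith) (by simp; linarith) ha (ak_le hω hδ hk)]
  have hkey := cpow_key (by linarith : (0 : ℝ) < k) (by linarith : (0 : ℝ) < ω) δ (2 * s) 2
  have e2 : ((k * ω : ℝ) : ℂ) ^ (1 - 2 * s) = ((k : ℝ) : ℂ) ^ (-(2 * s - 1)) * (ω : ℂ) ^ (1 - 2 * s) := by
    rw [Complex.ofReal_mul, Complex.mul_cpow_ofReal_nonneg (by linarith) (by linarith), neg_sub]
    simp
  rw [mul_add, mul_sub]
  have e3 : ((k * ω : ℝ) : ℂ) ^ (1 - 2 * s) * (((Real.cosh η - 1 : ℝ) : ℂ) / (2 * s - 2) *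
      (((k : ℝ) ^ (δ - 1) / ω : ℝ) : ℂ) ^ (2 - 2 * s)) = ((Real.cosh η - 1 : ℝ) : ℂ) / (2 * s - 2) *
      (ω : ℂ) ^ (1 - 2 : ℂ) * ((k : ℝ) : ℂ) ^ (-(1 - δ * (2 - 2 * s))) := by
    rw [mul_left_comm, hkey, show (-(1 - (δ : ℂ) * (2 - 2 * s))) = 1 - 2 + δ * (2 - 2 * s) by ring]
    simp only [Complex.ofReal_natCast]
    ring
  rw [e3]
  unfold QQ
  rw [sub_left_inj.2 (show ((k * ω : ℝ) : ℂ) ^ (1 - 2 * s) * GG η (2 * s) =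
    (ω : ℂ) ^ (1 - 2 * s) * GG η (2 * s) * ((k : ℝ) : ℂ) ^ (-(2 * s - 1)) by rw [e2]; ring)]

lemma tsum_JJ (hη : 0 < η) (hω : 1 ≤ ω) (hδ0 : 0 < δ) (hδ : δ < 1 / 8) {s : ℂ}
    (hs : 1 < s.re) (hs2 : s.re < 2) :
    ∑' k : ℕ, JJ ω η δ phi0 (k + 1) s = TF ω η δ s := by
  have s1 := (hasSum_zeta (z := 2 * s - 1) (by simp; linarith)).mul_left
    ((ω : ℂ) ^ (1 - 2 * s) * GG η (2 * s))
  have s2 := ((QQ_lus (η := η) hω hδ0 hδ).summable (s := s) ⟨by linarith, hs2⟩).of_norm.hasSum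
  have s3 := (hasSum_zeta (z := 1 - δ * (2 - 2 * s)) (by simp; nlinarith)).mul_left
    (((Real.cosh η - 1 : ℝ) : ℂ) / (2 * s - 2) * (ω : ℂ) ^ (1 - 2 : ℂ))
  have s4 := (s1.sub s2).add s3
  have : (fun k : ℕ => JJ ω η δ phi0 (k + 1) s) = _ := funext fun k =>
    JJ_phi0 hη hω hδ (by omega : 1 ≤ k + 1) hs hs2
  rw [this, s4.tsum_eq]
  unfold TF QS
  ring

end


lemma ana_of {f : ℂ → ℂ} {U : Set ℂ} (hU : IsOpen U) (h : ∀ z ∈ U, DifferentiableAt ℂ f z) {s : ℂ}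
    (hs : s ∈ U) : AnalyticAt ℂ f s := by
  have : DifferentiableOn ℂ f U := fun z hz => (h z hz).differentiableWithinAt
  exact this.analyticAt (hU.mem_nhds hs)

noncomputable def zr : ℂ → ℂ := Function.update (fun z => (z - 1) * riemannZeta z) 1 1

lemma zr_of_ne {z : ℂ} (hz : z ≠ 1) : zr z = (z - 1) * riemannZeta z := by
  unfold zr; rw [Function.update_of_ne hz]

lemma zr_diff : Differentiable ℂ zr := by
  have hne : ∀ z : ℂ, z ≠ 1 → DifferentiableAt ℂ zr z := by
    intro z hz
    have h : DifferentiableAt ℂ (fun z => (z - 1) * riemannZeta z) z :=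
      (by fun_prop : DifferentiableAt ℂ (fun z : ℂ => z - 1) z).mul (differentiableAt_riemannZeta hz)
    refine h.congr_of_eventuallyEq ?_
    filter_upwards [isOpen_ne.mem_nhds hz] with y hy using zr_of_ne hy
  intro z
  by_cases hz : z = 1
  · subst hz
    apply AnalyticAt.differentiableAt
    apply Complex.analyticAt_of_differentiable_on_punctured_nhds_of_continuousAt
    · filter_upwards [self_mem_nhdsWithin] with y hy using hne y hy
    · unfold zr
      rw [continuousAt_update_same]
      exact riemannZeta_residue_one
  · exact hne z hz

lemma zeta_mero (x : ℂ) : MeromorphicAt riemannZeta x := by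
  have h1 : AnalyticAt ℂ zr x := zr_diff.analyticAt x
  have h2 : AnalyticAt ℂ (fun z : ℂ => z - 1) x := by fun_prop
  refine (h1.meromorphicAt.div h2.meromorphicAt).congr ?_
  have h : ∀ᶠ z in nhdsWithin x {x}ᶜ, z ≠ 1 := by
    by_cases hx : x = 1
    · subst hx; exact self_mem_nhdsWithin
    · exact nhdsWithin_le_nhds (isOpen_ne.mem_nhds hx)
  filter_upwards [h] with z hz
  have : z - 1 ≠ 0 := sub_ne_zero.2 hz
  simp only [Pi.div_apply]
  rw [zr_of_ne hz]
  field_simp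

section
variable {ω : ℕ} {η δ : ℝ}

noncomputable def TD (ω : ℕ) (η δ : ℝ) (s : ℂ) : ℂ := ∑' k : ℕ, JJ ω η δ phi0 (k + 1) s
noncomputable def HR (ω : ℕ) (η δ : ℝ) (s : ℂ) : ℂ := ∑' k : ℕ, JJ ω η δ phiR (k + 1) s
open Classical in
noncomputable def TT (ω : ℕ) (η δ : ℝ) (s : ℂ) : ℂ :=
  if s.re < 3 / 2 then TF ω η δ s else TD ω η δ s

lemma isOpen_re (a : ℝ) : IsOpen {s : ℂ | a < s.re} := isOpen_lt continuous_const Complex.continuous_re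
lemma isOpen_re2 (a : ℝ) : IsOpen {s : ℂ | s.re < a} := isOpen_lt Complex.continuous_re continuous_const

lemma TD_diff (hη : 0 < η) (hω : 1 ≤ ω) (hδ0 : 0 < δ) {s : ℂ} (hs : 1 < s.re) :
    DifferentiableAt ℂ (TD ω η δ) s :=
  (adm_phi0.lus hη hω hδ0).differentiableAt
    (fun _ _ hz => adm_phi0.differentiableAt hη hω hδ0 (by omega) hz) hs

lemma HR_diff (hη : 0 < η) (hω : 1 ≤ ω) (hδ0 : 0 < δ) {s : ℂ} (hs : -1 < s.re) :
    DifferentiableAt ℂ (HR ω η δ) s :=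
  (adm_phiR.lus hη hω hδ0).differentiableAt
    (fun _ _ hz => adm_phiR.differentiableAt hη hω hδ0 (by omega) hz) hs

lemma HR_zero : HR ω η δ 0 = 0 := by
  unfold HR JJ
  simp [phiR_zero]

lemma TT_eq (hη : 0 < η) (hω : 1 ≤ ω) (hδ0 : 0 < δ) (hδ : δ < 1 / 8) {s : ℂ} (hs : 1 < s.re) :
    TT ω η δ s = TD ω η δ s := by
  unfold TT
  split_ifs with h
  · exact (tsum_JJ hη hω hδ0 hδ hs (by linarith)).symm
  · rfl

lemma TF_mero (hη : 0 < η) (hω : 1 ≤ ω) (hδ0 : 0 < δ) (hδ : δ < 1 / 8) {s : ℂ} (hs : -(1 / 2) < s.re)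
    (hs2 : s.re < 2) : MeromorphicAt (TF ω η δ) s := by
  have hw : (ω : ℂ) ≠ 0 := by exact_mod_cast (by omega : ω ≠ 0)
  have a1 : MeromorphicAt (fun s : ℂ => (ω : ℂ) ^ (1 - 2 * s)) s := by
    apply AnalyticAt.meromorphicAt
    apply Differentiable.analyticAt
    intro z
    exact DifferentiableAt.const_cpow (by fun_prop) (Or.inl hw)
  have a2 : MeromorphicAt (fun s : ℂ => riemannZeta (2 * s - 1)) s :=
    (zeta_mero (2 * s - 1)).comp_analyticAt (f := riemannZeta) (g := fun s : ℂ => 2 * s - 1) (by fun_prop)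
  have a3 : MeromorphicAt (fun s : ℂ => riemannZeta (1 - δ * (2 - 2 * s))) s :=
    (zeta_mero _).comp_analyticAt (f := riemannZeta) (g := fun s : ℂ => 1 - δ * (2 - 2 * s)) (by fun_prop)
  have a4 : MeromorphicAt (QS ω η δ) s :=
    (ana_of ((isOpen_re _).inter (isOpen_re2 _)) (fun z hz => QS_diff hω hδ0 hδ hz.1 hz.2)
      ⟨hs, hs2⟩).meromorphicAt
  have a5 : MeromorphicAt (fun s => PP η (2 * s) 1) s := by
    refine (ana_of (isOpen_re2 2) (fun z hz => ?_) hs2).meromorphicAt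
    have hz : z.re < 2 := hz
    exact (PP_diff η (w := 2 * z) (by simp; linarith) zero_le_one le_rfl).comp z
      (by fun_prop : DifferentiableAt ℂ (fun s : ℂ => 2 * s) z)
  have a6 : MeromorphicAt (fun s => BB η (2 * s)) s := by
    refine (ana_of (isOpen_re (-(1 / 2))) (fun z hz => ?_) hs).meromorphicAt
    have hz : -(1 / 2) < z.re := hz
    exact (BB_diff hη (w := 2 * z) (by simp; linarith)).comp z
      (by fun_prop : DifferentiableAt ℂ (fun s : ℂ => 2 * s) z)
  have id' : MeromorphicAt (fun s : ℂ => s) s := MeromorphicAt.id s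
  have l2 : MeromorphicAt (fun s : ℂ => 2 * s) s := (MeromorphicAt.const 2 s).mul id'
  have a7 : MeromorphicAt (fun s => GG η (2 * s)) s := by
    unfold GG
    exact (((a5.add a6).sub ((MeromorphicAt.const _ s).div (l2.sub (MeromorphicAt.const 2 s)))).add
      ((MeromorphicAt.const _ s).div (l2.sub (MeromorphicAt.const 1 s)))).sub
      ((MeromorphicAt.const 1 s).div l2)
  unfold TF
  exact (((a1.mul a2).mul a7).sub a4).add ((((MeromorphicAt.const _ s).div
    (l2.sub (MeromorphicAt.const 2 s))).mul (MeromorphicAt.const _ s)).mul a3)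

lemma TT_mero (hη : 0 < η) (hω : 1 ≤ ω) (hδ0 : 0 < δ) (hδ : δ < 1 / 8) {s : ℂ} (hs : -(1 / 2) < s.re) :
    MeromorphicAt (TT ω η δ) s := by
  by_cases h : s.re < 3 / 2
  · refine (TF_mero hη hω hδ0 hδ hs (by linarith)).congr (nhdsWithin_le_nhds ?_)
    filter_upwards [(isOpen_re2 (3 / 2)).mem_nhds h] with z hz
    unfold TT
    rw [if_pos hz]
  · have h1 : 1 < s.re := by linarith
    refine (ana_of (isOpen_re 1) (fun z hz => TD_diff hη hω hδ0 hz) h1).meromorphicAt.congr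
      (nhdsWithin_le_nhds ?_)
    filter_upwards [(isOpen_re 1).mem_nhds h1] with z hz
    exact (TT_eq hη hω hδ0 hδ hz).symm

noncomputable def Fgen (ω : ℕ) (η δ : ℝ) (s : ℂ) : ℂ :=
  (2 * Complex.sin ((Real.pi : ℂ) * s) / (Real.pi : ℂ)) *
    (TT ω η δ s + s / 4 * TT ω η δ (s + 1) + HR ω η δ s)

lemma Fgen_mero (hη : 0 < η) (hω : 1 ≤ ω) (hδ0 : 0 < δ) (hδ : δ < 1 / 8) {s : ℂ} (hs : -(1 / 2) < s.re) :
    MeromorphicAt (Fgen ω η δ) s := by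
  have b1 : MeromorphicAt (fun s : ℂ => 2 * Complex.sin ((Real.pi : ℂ) * s) / (Real.pi : ℂ)) s := by
    apply AnalyticAt.meromorphicAt
    apply Differentiable.analyticAt
    fun_prop
  have b2 : MeromorphicAt (fun s : ℂ => s / 4) s := by
    apply AnalyticAt.meromorphicAt
    fun_prop
  have b3 := TT_mero hη hω hδ0 hδ hs
  have b4 : MeromorphicAt (fun s => TT ω η δ (s + 1)) s :=
    (TT_mero hη hω hδ0 hδ (s := s + 1) (by simp; linarith)).comp_analyticAt
      (g := fun s : ℂ => s + 1) (by fun_prop)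
  have b5 : MeromorphicAt (HR ω η δ) s :=
    (ana_of (isOpen_re (-1)) (fun z hz => HR_diff hη hω hδ0 hz)
      (by show -1 < s.re; linarith)).meromorphicAt
  unfold Fgen
  exact b1.mul ((b3.add (b2.mul b4)).add b5)

noncomputable def sg (s : ℂ) : ℂ := dslope (fun s : ℂ => 2 * Complex.sin ((Real.pi : ℂ) * s) / (Real.pi : ℂ)) 0 s

lemma sg_of_ne {s : ℂ} (hs : s ≠ 0) : 2 * Complex.sin ((Real.pi : ℂ) * s) / (Real.pi : ℂ) = sg s * s := by
  unfold sg
  rw [dslope_of_ne _ hs, slope_def_field]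
  simp
  field_simp

lemma sg_diff : Differentiable ℂ sg := by
  have h : Differentiable ℂ (fun s : ℂ => 2 * Complex.sin ((Real.pi : ℂ) * s) / (Real.pi : ℂ)) := by fun_prop
  have := (Complex.differentiableOn_dslope (c := 0) (s := Set.univ) Filter.univ_mem).2 h.differentiableOn
  exact differentiableOn_univ.1 this

lemma sg_zero : sg 0 = 2 := by
  unfold sg
  rw [dslope_same]
  have hpi : (Real.pi : ℂ) ≠ 0 := by exact_mod_cast Real.pi_ne_zero
  have h1 : HasDerivAt (fun s : ℂ => (Real.pi : ℂ) * s) (Real.pi : ℂ) 0 := by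
    simpa using (hasDerivAt_id (0 : ℂ)).const_mul (Real.pi : ℂ)
  have h2 := ((h1.csin).const_mul 2).div_const (Real.pi : ℂ)
  rw [h2.deriv]
  simp

lemma sg_deriv : deriv sg 0 = 0 := by
  have he : ∀ s, sg (-s) = sg s := by
    intro s
    by_cases hs : s = 0
    · simp [hs]
    · have h1 := sg_of_ne hs
      have h2 := sg_of_ne (neg_ne_zero.2 hs)
      rw [mul_neg, Complex.sin_neg, mul_neg, neg_div, h1, mul_neg, neg_inj] at h2
      exact (mul_right_cancel₀ hs h2).symm
  have h := deriv_comp_neg sg (0 : ℂ)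
  simp only [he, neg_zero] at h
  have h2 : deriv sg 0 + deriv sg 0 = 0 := by nth_rewrite 1 [h]; ring
  exact add_self_eq_zero.1 h2

noncomputable def nZ (ω : ℕ) (s : ℂ) : ℂ := (ω : ℂ) ^ (1 - 2 * s) * riemannZeta (2 * s - 1)
noncomputable def nG (η : ℝ) (s : ℂ) : ℂ :=
  PP η (2 * s) 1 + BB η (2 * s) - ((Real.cosh η - 1 : ℝ) : ℂ) / (2 * s - 2) + η / (2 * s - 1)
noncomputable def nV (ω : ℕ) (η δ : ℝ) (s : ℂ) : ℂ :=
  -QS ω η δ s + ((Real.cosh η - 1 : ℝ) : ℂ) / (2 * s - 2) * (ω : ℂ) ^ (1 - 2 : ℂ) *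
    riemannZeta (1 - δ * (2 - 2 * s)) + HR ω η δ s - s / 4 * QS ω η δ (s + 1)
noncomputable def nW (ω : ℕ) (s : ℂ) : ℂ := (ω : ℂ) ^ (1 - 2 * (s + 1)) * (zr (2 * (s + 1) - 1) / 2)
noncomputable def nD (η : ℝ) (s : ℂ) : ℂ :=
  PP η (2 * (s + 1)) 1 + BB η (2 * (s + 1)) + η / (2 * (s + 1) - 1) - 1 / (2 * (s + 1))
noncomputable def nN (ω : ℕ) (δ : ℝ) (s : ℂ) : ℂ :=
  (ω : ℂ) ^ (1 - 2 : ℂ) * (zr (1 - δ * (2 - 2 * (s + 1))) / (4 * δ))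

noncomputable def nY (ω : ℕ) (η δ : ℝ) (s : ℂ) : ℂ :=
  nZ ω s * (s * nG η s - 1 / 2) + s * nV ω η δ s +
    (1 / 4) * (nW ω s * (s * nD η s - ((Real.cosh η - 1 : ℝ) : ℂ) / 2) +
      ((Real.cosh η - 1 : ℝ) : ℂ) * nN ω δ s)

lemma Fgen_near (hδ0 : 0 < δ) {s : ℂ} (hs0 : s ≠ 0) (hs : s ∈ Metric.ball (0 : ℂ) (1 / 4)) :
    Fgen ω η δ s = sg s * nY ω η δ s := by
  obtain ⟨h1, h2, -⟩ := ball_re hs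
  simp only [Complex.zero_re, zero_sub, zero_add] at h1 h2
  have hδ : (δ : ℂ) ≠ 0 := by exact_mod_cast hδ0.ne'
  have t1 : TT ω η δ s = TF ω η δ s := by unfold TT; rw [if_pos (by linarith)]
  have t2 : TT ω η δ (s + 1) = TF ω η δ (s + 1) := by
    unfold TT; rw [if_pos (by simp; linarith)]
  have z1 : zr (2 * (s + 1) - 1) = 2 * s * riemannZeta (2 * (s + 1) - 1) := by
    rw [zr_of_ne]
    · ring
    · intro h; apply hs0; linear_combination h / 2
  have z2 : zr (1 - δ * (2 - 2 * (s + 1))) = 2 * δ * s * riemannZeta (1 - δ * (2 - 2 * (s + 1))) := by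
    rw [zr_of_ne]
    · ring
    · intro h; apply hs0
      have : (δ : ℂ) * s = 0 := by linear_combination h / 2
      exact (mul_eq_zero.1 this).resolve_left hδ
  unfold Fgen
  rw [sg_of_ne hs0, t1, t2, mul_assoc]
  congr 1
  unfold nY nZ nG nV nW nD nN TF GG
  rw [z1, z2]
  have d1 : (2 * (s + 1) - 2) = 2 * s := by ring
  rw [d1]
  generalize riemannZeta (2 * s - 1) = Z1
  generalize riemannZeta (2 * (s + 1) - 1) = Z2
  generalize riemannZeta (1 - δ * (2 - 2 * (s + 1))) = Z3
  generalize riemannZeta (1 - δ * (2 - 2 * s)) = Z4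
  generalize (ω : ℂ) ^ (1 - 2 * s) = W1
  generalize (ω : ℂ) ^ (1 - 2 * (s + 1)) = W2
  generalize (ω : ℂ) ^ (1 - 2 : ℂ) = W3
  generalize ((Real.cosh η - 1 : ℝ) : ℂ) = c
  generalize (η : ℂ) / (2 * s - 1) = q1
  generalize (η : ℂ) / (2 * (s + 1) - 1) = q2
  generalize c / (2 * s - 2) = q3
  generalize 1 / (2 * (s + 1)) = q4
  field_simp
  ring

end


section
variable {ω : ℕ} {η δ : ℝ}

lemma lin2_diff (s : ℂ) : DifferentiableAt ℂ (fun s : ℂ => 2 * s) s := by fun_prop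
lemma lin3_diff (s : ℂ) : DifferentiableAt ℂ (fun s : ℂ => 2 * (s + 1)) s := by fun_prop

lemma ball_re0 {s : ℂ} (hs : s ∈ Metric.ball (0 : ℂ) (1 / 4)) : -(1 / 4) < s.re ∧ s.re < 1 / 4 := by
  obtain ⟨h1, h2, -⟩ := ball_re hs
  simp only [Complex.zero_re, zero_sub, zero_add] at h1 h2
  exact ⟨h1, h2⟩

lemma ne_of_re' {z w : ℂ} (h : z.re ≠ w.re) : z ≠ w := fun e => h (by rw [e])

lemma nZ_diff (hω : 1 ≤ ω) {s : ℂ} (hs : s ∈ Metric.ball (0 : ℂ) (1 / 4)) :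
    DifferentiableAt ℂ (nZ ω) s := by
  obtain ⟨h1, h2⟩ := ball_re0 hs
  have hw : (ω : ℂ) ≠ 0 := by exact_mod_cast (by omega : ω ≠ 0)
  unfold nZ
  apply DifferentiableAt.mul
  · exact DifferentiableAt.const_cpow (by fun_prop) (Or.inl hw)
  · refine DifferentiableAt.comp (g := riemannZeta) (f := fun s : ℂ => 2 * s - 1) s
      (differentiableAt_riemannZeta (ne_of_re' ?_)) (by fun_prop)
    simp; linarith

lemma nG_diff (hη : 0 < η) {s : ℂ} (hs : s ∈ Metric.ball (0 : ℂ) (1 / 4)) :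
    DifferentiableAt ℂ (nG η) s := by
  obtain ⟨h1, h2⟩ := ball_re0 hs
  unfold nG
  have e1 : DifferentiableAt ℂ (fun s => PP η (2 * s) 1) s :=
    (PP_diff η (w := 2 * s) (by simp; linarith) zero_le_one le_rfl).comp s (lin2_diff s)
  have e2 : DifferentiableAt ℂ (fun s => BB η (2 * s)) s :=
    (BB_diff hη (w := 2 * s) (by simp; linarith)).comp s (lin2_diff s)
  have n1 : 2 * s - 2 ≠ 0 := ne_of_re' (by simp; linarith)
  have n2 : 2 * s - 1 ≠ 0 := ne_of_re' (by simp; linarith)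
  refine ((e1.add e2).sub ?_).add ?_
  · exact (differentiableAt_const _).div (by fun_prop) n1
  · exact (differentiableAt_const _).div (by fun_prop) n2

lemma nV_diff (hη : 0 < η) (hω : 1 ≤ ω) (hδ0 : 0 < δ) (hδ : δ < 1 / 8) {s : ℂ}
    (hs : s ∈ Metric.ball (0 : ℂ) (1 / 4)) : DifferentiableAt ℂ (nV ω η δ) s := by
  obtain ⟨h1, h2⟩ := ball_re0 hs
  unfold nV
  have n1 : 2 * s - 2 ≠ 0 := ne_of_re' (by simp; linarith)
  have e1 : DifferentiableAt ℂ (QS ω η δ) s := QS_diff hω hδ0 hδ (by linarith) (by linarith)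
  have e2 : DifferentiableAt ℂ (fun s => QS ω η δ (s + 1)) s :=
    DifferentiableAt.comp (g := QS ω η δ) (f := fun s : ℂ => s + 1) s
      (QS_diff hω hδ0 hδ (by simp; linarith) (by simp; linarith)) (by fun_prop)
  have e3 := HR_diff hη hω hδ0 (s := s) (by linarith)
  have e4 : DifferentiableAt ℂ (fun s : ℂ => riemannZeta (1 - δ * (2 - 2 * s))) s := by
    refine DifferentiableAt.comp (g := riemannZeta) (f := fun s : ℂ => 1 - δ * (2 - 2 * s)) s
      (differentiableAt_riemannZeta ?_) (by fun_prop)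
    intro h
    have h3 : (δ : ℂ) * (2 * s - 2) = 0 := by linear_combination h
    rcases mul_eq_zero.1 h3 with h4 | h4
    · exact hδ0.ne' (by exact_mod_cast h4)
    · exact n1 h4
  have e5 : DifferentiableAt ℂ (fun s : ℂ => ((Real.cosh η - 1 : ℝ) : ℂ) / (2 * s - 2)) s :=
    (differentiableAt_const _).div (by fun_prop) n1
  have e6 : DifferentiableAt ℂ (fun s : ℂ => s / 4) s := by fun_prop
  exact ((e1.neg.add ((e5.mul (differentiableAt_const _)).mul e4)).add e3).sub (e6.mul e2)

lemma nW_diff (hω : 1 ≤ ω) (s : ℂ) : DifferentiableAt ℂ (nW ω) s := by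
  have hw : (ω : ℂ) ≠ 0 := by exact_mod_cast (by omega : ω ≠ 0)
  unfold nW
  apply DifferentiableAt.mul
  · exact DifferentiableAt.const_cpow (by fun_prop) (Or.inl hw)
  · apply DifferentiableAt.div_const
    exact DifferentiableAt.comp (g := zr) (f := fun s : ℂ => 2 * (s + 1) - 1) s
      (zr_diff _) (by fun_prop)

lemma nN_diff (s : ℂ) : DifferentiableAt ℂ (nN ω δ) s := by
  unfold nN
  apply DifferentiableAt.const_mul
  apply DifferentiableAt.div_const
  exact DifferentiableAt.comp (g := zr) (f := fun s : ℂ => 1 - δ * (2 - 2 * (s + 1))) s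
      (zr_diff _) (by fun_prop)

lemma nD_diff (hη : 0 < η) {s : ℂ} (hs : s ∈ Metric.ball (0 : ℂ) (1 / 4)) :
    DifferentiableAt ℂ (nD η) s := by
  obtain ⟨h1, h2⟩ := ball_re0 hs
  unfold nD
  have e1 : DifferentiableAt ℂ (fun s => PP η (2 * (s + 1)) 1) s :=
    DifferentiableAt.comp (g := fun w => PP η w 1) (f := fun s : ℂ => 2 * (s + 1)) s
      (PP_diff η (by simp; linarith) zero_le_one le_rfl) (lin3_diff s)
  have e2 : DifferentiableAt ℂ (fun s => BB η (2 * (s + 1))) s :=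
    DifferentiableAt.comp (g := BB η) (f := fun s : ℂ => 2 * (s + 1)) s
      (BB_diff hη (by simp; linarith)) (lin3_diff s)
  have n1 : 2 * (s + 1) ≠ 0 := ne_of_re' (by simp; linarith)
  have n2 : 2 * (s + 1) - 1 ≠ 0 := ne_of_re' (by simp; linarith)
  refine ((e1.add e2).add ?_).sub ?_
  · exact (differentiableAt_const _).div (by fun_prop) n2
  · exact (differentiableAt_const _).div (by fun_prop) n1

lemma nY_hasDeriv (hη : 0 < η) (hω : 1 ≤ ω) (hδ0 : 0 < δ) (hδ : δ < 1 / 8) {s : ℂ}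
    (hs : s ∈ Metric.ball (0 : ℂ) (1 / 4)) :
    HasDerivAt (nY ω η δ) (deriv (nZ ω) s * (s * nG η s - 1 / 2) + nZ ω s * (nG η s + s * deriv (nG η) s) +
      (nV ω η δ s + s * deriv (nV ω η δ) s) +
      (1 / 4) * (deriv (nW ω) s * (s * nD η s - ((Real.cosh η - 1 : ℝ) : ℂ) / 2) +
        nW ω s * (nD η s + s * deriv (nD η) s) + ((Real.cosh η - 1 : ℝ) : ℂ) * deriv (nN ω δ) s)) s := by
  have a1 := (nZ_diff hω hs).hasDerivAt
  have a2 := (nG_diff hη hs).hasDerivAt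
  have a3 := (nV_diff hη hω hδ0 hδ hs).hasDerivAt
  have a4 := (nW_diff hω s).hasDerivAt
  have a5 := (nD_diff hη hs).hasDerivAt
  have a6 := (nN_diff (ω := ω) (δ := δ) s).hasDerivAt
  have i := hasDerivAt_id s
  have := ((a1.mul ((i.mul a2).sub_const (1 / 2))).add (i.mul a3)).add
    (((a4.mul ((i.mul a5).sub_const (((Real.cosh η - 1 : ℝ) : ℂ) / 2))).add
      (a6.const_mul ((Real.cosh η - 1 : ℝ) : ℂ))).const_mul (1 / 4 : ℂ))
  convert! this using 1
  simp only [id, Pi.mul_apply]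
  ring

lemma sgY_deriv (hη : 0 < η) (hω : 1 ≤ ω) (hδ0 : 0 < δ) (hδ : δ < 1 / 8) :
    deriv (fun s => sg s * nY ω η δ s) 0 = 2 * (-(deriv (nZ ω) 0) / 2 + nZ ω 0 * nG η 0 + nV ω η δ 0 +
      (1 / 4) * (nW ω 0 * nD η 0 - ((Real.cosh η - 1 : ℝ) : ℂ) / 2 * deriv (nW ω) 0 +
        ((Real.cosh η - 1 : ℝ) : ℂ) * deriv (nN ω δ) 0)) := by
  have h1 := (sg_diff 0).hasDerivAt
  have h2 := nY_hasDeriv hη hω hδ0 hδ (Metric.mem_ball_self (by norm_num : (0 : ℝ) < 1 / 4))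
  have := (h1.mul h2).deriv
  refine Eq.trans ?_ (this.trans ?_)
  · rfl
  · rw [sg_deriv, sg_zero]; ring

lemma nZ_deriv (hω : 1 ≤ ω) : deriv (nZ ω) 0 =
    -2 * (Real.log ω : ℂ) * ω * riemannZeta (-1) + 2 * ω * deriv riemannZeta (-1) := by
  have hw : (ω : ℂ) ≠ 0 := by exact_mod_cast (by omega : ω ≠ 0)
  have i1 : HasDerivAt (fun s : ℂ => 1 - 2 * s) (-2) 0 := by
    simpa using ((hasDerivAt_id (0 : ℂ)).const_mul 2).const_sub 1
  have i2 : HasDerivAt (fun s : ℂ => 2 * s - 1) 2 0 := by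
    simpa using ((hasDerivAt_id (0 : ℂ)).const_mul 2).sub_const 1
  have h1 := i1.const_cpow (c := (ω : ℂ)) (Or.inl hw)
  have hz : HasDerivAt riemannZeta (deriv riemannZeta (-1)) (2 * 0 - 1) := by
    rw [show (2 * 0 - 1 : ℂ) = -1 by ring]
    exact (differentiableAt_riemannZeta (by norm_num)).hasDerivAt
  have h2 := HasDerivAt.comp (0 : ℂ) hz i2
  have := (h1.mul h2).deriv
  refine Eq.trans ?_ (this.trans ?_)
  · rfl
  · simp only [mul_zero, sub_zero, Complex.cpow_one, Function.comp, zero_sub]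
    rw [Complex.ofReal_log (by positivity)]
    push_cast
    ring

lemma nZ_zero : nZ ω 0 = ω * riemannZeta (-1) := by
  unfold nZ; simp

lemma nG_zero (hη : 0 < η) : nG η 0 = PP η 0 1 + ((Real.cosh η - 1 : ℝ) : ℂ) / 2 +
    ((-1 + Real.log 2 - Real.log (Real.sinh η) : ℝ) : ℂ) := by
  unfold nG
  rw [mul_zero, BB_zero hη]
  push_cast
  ring

lemma nV_zero : nV ω η δ 0 = -QS ω η δ 0 - ((Real.cosh η - 1 : ℝ) : ℂ) *
    (1 / 2 * (ω : ℂ) ^ (1 - 2 : ℂ) * riemannZeta (1 - δ * 2)) := by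
  unfold nV
  rw [HR_zero]
  simp only [mul_zero, sub_zero]
  ring

lemma QS_zero_bound (hω : 1 ≤ ω) (hδ0 : 0 < δ) (hδ : δ < 1 / 8) :
    ‖QS ω η δ 0‖ ≤ KK η * (1 / 4 * ∑' k : ℕ, ((k + 1 : ℕ) : ℝ) ^ (-2 : ℝ)) := by
  have hs := (summable_shift (p := -2) (by norm_num)).mul_left (KK η / 4)
  have := tsum_of_norm_bounded (f := fun k : ℕ => QQ ω η δ (k + 1) 0) hs.hasSum (fun k => by
    have := QQ_bound (η := η) hω hδ0 hδ (k := k + 1) (by omega) (s := 0) (by simp) (by simp)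
    simpa using this)
  refine this.trans (le_of_eq ?_)
  rw [tsum_mul_left]
  ring

lemma nD_zero_bound (hη : 0 < η) : ‖nD η 0‖ ≤ KK η / 2 + η := by
  have e : nD η 0 = PP η 2 1 + ∫ u in Set.Ioi (1 : ℝ), (u : ℂ) ^ (-2 : ℂ) * (gg η u : ℂ) := by
    rw [(Ioi_one_gg hη (w := 2) (by simp)).2]
    unfold nD
    simp only [zero_add, mul_one]
    ring
  rw [e]
  refine (norm_add_le _ _).trans (add_le_add ?_ ?_)
  · have := PP_bound η (w := 2) (by norm_num) zero_le_one le_rfl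
    refine this.trans (le_of_eq ?_)
    norm_num
    ring
  · have i : IntegrableOn (fun u : ℝ => η * u ^ (-2 : ℝ)) (Set.Ioi 1) :=
      (integrableOn_Ioi_rpow_of_lt (by norm_num) one_pos).const_mul η
    have := norm_integral_le_of_norm_le i (f := fun u : ℝ => (u : ℂ) ^ (-2 : ℂ) * (gg η u : ℂ))
      ((ae_restrict_iff' measurableSet_Ioi).2 (ae_of_all _ fun u hu => by
        have hu : (1 : ℝ) < u := hu
        rw [norm_cpow_mul _ (by linarith), abs_of_nonneg (gg_nonneg (by linarith)), mul_comm]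
        have := gg_le hη.le (u := u) (by linarith)
        simp only [Complex.re_ofNat]
        gcongr))
    refine this.trans (le_of_eq ?_)
    rw [integral_const_mul, integral_Ioi_rpow_of_lt (by norm_num) one_pos]
    norm_num

lemma zeta_neg_one : riemannZeta (-1) = -1 / 12 := by
  have := riemannZeta_neg_nat_eq_bernoulli 1
  norm_num at this
  rw [this]
  simp
  norm_num

lemma log_sinh_lim : Tendsto (fun η : ℝ => Real.log (Real.sinh η) - Real.log η)
    (nhdsWithin 0 (Set.Ioi 0)) (nhds 0) := by
  have h := (Real.hasDerivAt_sinh 0).tendsto_slope_zero_right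
  simp only [zero_add, Real.sinh_zero, sub_zero, Real.cosh_zero, smul_eq_mul] at h
  have h2 := (Real.continuousAt_log one_ne_zero).tendsto.comp h
  rw [Real.log_one] at h2
  refine h2.congr' ?_
  filter_upwards [self_mem_nhdsWithin] with η hη
  have hη : 0 < η := hη
  have : 0 < Real.sinh η := Real.sinh_pos_iff.2 hη
  simp only [Function.comp]
  rw [Real.log_mul (by positivity) (by positivity), Real.log_inv]
  ring

lemma final_lim (hω : 1 ≤ ω) (hδ0 : 0 < δ) (hδ : δ < 1 / 8) :
    Tendsto (fun η : ℝ => deriv (fun s => sg s * nY ω η δ s) 0 -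
          (2 * (ω : ℂ) * (-riemannZeta (-1) - deriv riemannZeta (-1) +
              riemannZeta (-1) * (Real.log (2 * ω) : ℂ)) +
            ((ω : ℂ) / 6) * (Real.log η : ℂ)))
        (nhdsWithin 0 (Set.Ioi 0)) (nhds 0) := by
  have lη : Tendsto (fun η : ℝ => η) (nhdsWithin 0 (Set.Ioi 0)) (nhds 0) := nhdsWithin_le_nhds
  have lc : Tendsto (fun η : ℝ => ((Real.cosh η - 1 : ℝ) : ℂ)) (nhdsWithin 0 (Set.Ioi 0)) (nhds 0) := by
    have : ContinuousAt (fun η : ℝ => ((Real.cosh η - 1 : ℝ) : ℂ)) 0 := by fun_prop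
    have := this.tendsto
    simp only [Real.cosh_zero, sub_self, Complex.ofReal_zero] at this
    exact this.mono_left nhdsWithin_le_nhds
  have lP : Tendsto (fun η : ℝ => PP η 0 1) (nhdsWithin 0 (Set.Ioi 0)) (nhds 0) := by
    refine squeeze_zero_norm (a := fun η => KK η * (1 / 4)) (fun η => ?_) ?_
    · simpa using PP_bound η (w := 0) (by norm_num) zero_le_one le_rfl
    · have := KK_tendsto.mul_const (1 / 4 : ℝ)
      rwa [zero_mul] at this
  have lQ : Tendsto (fun η : ℝ => QS ω η δ 0) (nhdsWithin 0 (Set.Ioi 0)) (nhds 0) := by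
    refine squeeze_zero_norm (fun η => QS_zero_bound hω hδ0 hδ) ?_
    simpa using KK_tendsto.mul_const (1 / 4 * ∑' k : ℕ, ((k + 1 : ℕ) : ℝ) ^ (-2 : ℝ))
  have lD : Tendsto (fun η : ℝ => nD η 0) (nhdsWithin 0 (Set.Ioi 0)) (nhds 0) := by
    refine squeeze_zero_norm' (a := fun η => KK η / 2 + η) ?_ ?_
    · filter_upwards [self_mem_nhdsWithin] with η hη using nD_zero_bound hη
    · simpa using (KK_tendsto.div_const 2).add lη
  have lL : Tendsto (fun η : ℝ => ((Real.log (Real.sinh η) - Real.log η : ℝ) : ℂ))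
      (nhdsWithin 0 (Set.Ioi 0)) (nhds 0) := by
    have := (Complex.continuous_ofReal.tendsto 0).comp log_sinh_lim
    simpa [Function.comp_def] using this
  have := ((((lP.add (lc.div_const 2)).sub lL).const_mul (2 * ω * riemannZeta (-1))).add
    ((lQ.neg.sub (lc.mul_const (1 / 2 * (ω : ℂ) ^ (1 - 2 : ℂ) * riemannZeta (1 - δ * 2)))).const_mul 2)).add
    (((((lD.const_mul (nW ω 0))).sub ((lc.div_const 2).mul_const (deriv (nW ω) 0))).add
      (lc.mul_const (deriv (nN ω δ) 0))).const_mul (1 / 2))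
  simp only [zero_div, add_zero, sub_zero, mul_zero, zero_mul, neg_zero] at this
  refine this.congr' ?_
  filter_upwards [self_mem_nhdsWithin] with η hη
  rw [sgY_deriv hη hω hδ0 hδ, nZ_deriv hω, nZ_zero, nG_zero hη, nV_zero, zeta_neg_one,
    Real.log_mul (by norm_num) (by positivity)]
  push_cast
  ring

lemma coneE_lus (hη : 0 < η) (hω : 1 ≤ ω) (hδ0 : 0 < δ) :
    LUS {s : ℂ | 1 < s.re ∧ s.re < 2} (fun k s =>
      (2 * Complex.sin ((Real.pi : ℂ) * s) / (Real.pi : ℂ)) * JJ ω η δ phiE (k + 1) s) := by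
  intro s hs
  obtain ⟨r, hr, -, M, hM, hb⟩ := adm_phiE.lus hη hω hδ0 (δ := δ) s hs.1
  have hc : ContinuousAt (fun s : ℂ => ‖2 * Complex.sin ((Real.pi : ℂ) * s) / (Real.pi : ℂ)‖) s := by fun_prop
  have h1 := hc.eventually (gt_mem_nhds (lt_add_one _))
  have h2 : {s : ℂ | 1 < s.re ∧ s.re < 2} ∈ nhds s :=
    ((isOpen_re 1).inter (isOpen_re2 2)).mem_nhds hs
  obtain ⟨r2, hr2, hsub⟩ := Metric.mem_nhds_iff.1 (inter_mem h1 h2)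
  refine ⟨min r r2, lt_min hr hr2, fun z hz => (hsub (Metric.ball_subset_ball (min_le_right _ _) hz)).2,
    fun k => (‖2 * Complex.sin ((Real.pi : ℂ) * s) / (Real.pi : ℂ)‖ + 1) * M k, hM.mul_left _, ?_⟩
  intro k z hz
  have b1 : ‖2 * Complex.sin ((Real.pi : ℂ) * z) / (Real.pi : ℂ)‖ <
      ‖2 * Complex.sin ((Real.pi : ℂ) * s) / (Real.pi : ℂ)‖ + 1 := (hsub (Metric.ball_subset_ball (min_le_right _ _) hz)).1
  have b2 := hb k z (Metric.ball_subset_ball (min_le_left _ _) hz)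
  rw [norm_mul]
  exact mul_le_mul b1.le b2 (norm_nonneg _) (by positivity)

lemma sum_eq (hη : 0 < η) (hω : 1 ≤ ω) (hδ0 : 0 < δ) (hδ : δ < 1 / 8) {s : ℂ} (hs : 1 < s.re) :
    ∑' k : ℕ, (2 * Complex.sin ((Real.pi : ℂ) * s) / (Real.pi : ℂ)) * JJ ω η δ phiE (k + 1) s =
      Fgen ω η δ s := by
  have s1 := ((adm_phi0.lus (δ := δ) hη hω hδ0).summable (s := s) hs).of_norm
  have s2 := ((adm_phi0.lus (δ := δ) hη hω hδ0).summable (s := s + 1)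
    (by show 1 < (s + 1).re; simp; linarith)).of_norm
  have s3 := ((adm_phiR.lus (δ := δ) hη hω hδ0).summable (s := s)
    (by show -1 < s.re; linarith)).of_norm
  rw [tsum_mul_left]
  unfold Fgen
  rw [TT_eq hη hω hδ0 hδ hs, TT_eq hη hω hδ0 hδ (s := s + 1) (by simp; linarith)]
  congr 1
  unfold TD HR
  rw [← tsum_mul_left, ← s1.tsum_add (s2.mul_left (s / 4)), ← (s1.add (s2.mul_left (s / 4))).tsum_add s3]
  exact tsum_congr fun k => JJ_split hη hω hδ0 (by omega) hs

end

/-- for fixed integer `ω ≥ 1` and `δ ∈ (0,1/8)`, for every `η > 0` the series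
`ζ_{E₁}(s) = Σ_{k≥1} E_{1,k}(s)` converges absolutely and locally uniformly on the strip
`1 < Re(s) < 2`, its sum extends to a meromorphic function on the half-plane `Re(s) > -1/2`
which is holomorphic at `s = 0`, and the derivative at `0` satisfies
`ζ_{E₁}'(0) = 2ω·(-ζ(-1) - ζ'(-1) + ζ(-1)·log(2ω)) + (ω/6)·log η + o(1)` as `η → 0⁺`. -/
theorem statement7 (ω : ℕ) (hω : 1 ≤ ω) (δ : ℝ) (hδ0 : 0 < δ) (hδ1 : δ < 1 / 8) :
    ∃ F : ℝ → ℂ → ℂ,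
      (∀ η : ℝ, 0 < η →
        (∀ s ∈ {s : ℂ | 1 < s.re ∧ s.re < 2},
          Summable (fun k : ℕ => ‖coneE1 ω η δ (k + 1) s‖)) ∧
        TendstoLocallyUniformlyOn
          (fun (n : ℕ) (s : ℂ) => ∑ k ∈ Finset.range n, coneE1 ω η δ (k + 1) s)
          (fun s : ℂ => ∑' k : ℕ, coneE1 ω η δ (k + 1) s)
          atTop {s : ℂ | 1 < s.re ∧ s.re < 2} ∧
        MeromorphicOn (F η) {s : ℂ | -(1 / 2) < s.re} ∧
        Set.EqOn (F η) (fun s : ℂ => ∑' k : ℕ, coneE1 ω η δ (k + 1) s)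
          {s : ℂ | 1 < s.re ∧ s.re < 2} ∧
        AnalyticAt ℂ (F η) 0) ∧
      Tendsto
        (fun η : ℝ => deriv (F η) 0 -
          (2 * (ω : ℂ) * (-riemannZeta (-1) - deriv riemannZeta (-1) +
              riemannZeta (-1) * (Real.log (2 * ω) : ℂ)) +
            ((ω : ℂ) / 6) * (Real.log η : ℂ)))
        (nhdsWithin 0 (Set.Ioi 0)) (nhds 0) := by
  have hce : ∀ (η : ℝ) (k : ℕ) (s : ℂ), coneE1 ω η δ k s =
      (2 * Complex.sin ((Real.pi : ℂ) * s) / (Real.pi : ℂ)) * JJ ω η δ phiE k s := fun η k s =>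
    coneE_eq coneE1 (fun _ _ _ _ _ => rfl) k s
  simp only [hce]
  have hev : ∀ η : ℝ, Function.update (Fgen ω η δ) 0 (sg 0 * nY ω η δ 0) =ᶠ[nhds 0]
      fun s => sg s * nY ω η δ s := by
    intro η
    filter_upwards [Metric.ball_mem_nhds (0 : ℂ) (by norm_num : (0 : ℝ) < 1 / 4)] with s hs
    by_cases h : s = 0
    · subst h; simp
    · rw [Function.update_of_ne h, Fgen_near hδ0 h hs]
  refine ⟨fun η => Function.update (Fgen ω η δ) 0 (sg 0 * nY ω η δ 0), ?_, ?_⟩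
  · intro η hη
    have hl := coneE_lus (δ := δ) hη hω hδ0
    have ha : AnalyticAt ℂ (Function.update (Fgen ω η δ) 0 (sg 0 * nY ω η δ 0)) 0 := by
      have : AnalyticAt ℂ (fun s => sg s * nY ω η δ s) 0 :=
        ana_of Metric.isOpen_ball (fun z hz => (sg_diff z).mul
          (nY_hasDeriv hη hω hδ0 hδ1 hz).differentiableAt)
          (Metric.mem_ball_self (by norm_num : (0 : ℝ) < 1 / 4))
      exact this.congr (hev η).symm
    refine ⟨fun s hs => hl.summable hs, hl.tendsto, ?_, ?_, ha⟩
    · intro s hs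
      by_cases h : s = 0
      · subst h; exact ha.meromorphicAt
      · refine (Fgen_mero hη hω hδ0 hδ1 hs).congr (nhdsWithin_le_nhds ?_)
        filter_upwards [isOpen_ne.mem_nhds h] with z hz
        exact (Function.update_of_ne hz _ _).symm
    · intro s hs
      have h : s ≠ 0 := by
        rintro rfl
        have := hs.1
        simp at this
        linarith
      show Function.update (Fgen ω η δ) 0 (sg 0 * nY ω η δ 0) s = _
      rw [Function.update_of_ne h]
      exact (sum_eq hη hω hδ0 hδ1 hs.1).symm
  · have := final_lim (ω := ω) hω hδ0 hδ1
    refine this.congr fun η => ?_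
    rw [(hev η).deriv_eq]
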